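/- arXiv:2208.05761 — 4 statements merged into one kernel-verified Lean document; each statement's English description precedes it below -/
import Mathlib

section
/- For every positive integer n there exists a finite 2-generated group G with e(G) ≥ n and an element g ∈ G with e(G,g) ≤ 5. -/
open Subgroup

noncomputable def genProb (G : Type*) [Group G] (Y : Set G) (n : ℕ) : ℝ :=
  (Nat.card {v : Fin n → G // Subgroup.closure (Y ∪ Set.range v) = ⊤} : ℝ) /
    (Nat.card G : ℝ) ^ n

noncomputable def eTime (G : Type*) [Group G] (Y : Set G) : ℝ :=
  ∑' n : ℕ, (1 - genProb G Y n)

open MulAction Equiv.Perm in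
/-- n-transitivity on finsets. -/
lemma exists_map_finset {α : Type*} [Fintype α] [DecidableEq α] {H : Subgroup (Equiv.Perm α)} {n : ℕ}
    (hH : IsMultiplyPretransitive H α n) (A B : Finset α) (hA : A.card = n) (hB : B.card = n) :
    ∃ u ∈ H, ∀ x, u x ∈ B ↔ x ∈ A := by
  let eA := A.equivFinOfCardEq hA
  let eB := B.equivFinOfCardEq hB
  let fA : Fin n ↪ α := eA.symm.toEmbedding.trans (Function.Embedding.subtype _)
  let fB : Fin n ↪ α := eB.symm.toEmbedding.trans (Function.Embedding.subtype _)
  obtain ⟨⟨u, hu⟩, h⟩ := (isMultiplyPretransitive_iff).1 hH fA fB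
  refine ⟨u, hu, ?_⟩
  have h1 : ∀ x ∈ A, u x ∈ B := by
    intro x hx
    have h2 := DFunLike.congr_fun h (eA ⟨x, hx⟩)
    have h3 : fA (eA ⟨x, hx⟩) = x := by simp [fA]
    rw [Function.Embedding.smul_apply, h3] at h2
    change u x = _ at h2
    rw [h2]
    exact (eB.symm _).2
  have h4 : A.map u.toEmbedding = B := by
    apply Finset.eq_of_subset_of_card_le
    · intro y hy
      simp only [Finset.mem_map] at hy
      obtain ⟨x, hx, rfl⟩ := hy
      exact h1 x hx
    · simp [hA, hB]
  intro x
  rw [← h4]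
  simp

lemma comm_support {α : Type*} [Fintype α] [DecidableEq α] (a b : Equiv.Perm α) (x : α)
    (hx : (a * b * a⁻¹ * b⁻¹) x ≠ x) (I : Finset α) (hI : ∀ y, a y ≠ y → b y ≠ y → y ∈ I) :
    x ∈ I ∪ I.image a ∪ I.image b := by
  simp only [Equiv.Perm.coe_mul, Function.comp_apply] at hx
  simp only [Finset.mem_union, Finset.mem_image]
  have hinv : ∀ (c : Equiv.Perm α) y, c (c⁻¹ y) = y := fun c y => by simp
  by_cases hxb : b x = x
  · have h1 : b⁻¹ x = x := by rw [Equiv.Perm.inv_eq_iff_eq, hxb]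
    rw [h1] at hx
    left; right
    refine ⟨a⁻¹ x, hI _ ?_ ?_, by simp⟩
    · rw [hinv]; intro h
      rw [← h, hxb] at hx
      exact hx (by nth_rw 1 [h]; simp)
    · intro h; rw [h] at hx; simp at hx
  · by_cases hxa : a x = x
    · right
      refine ⟨b⁻¹ x, hI _ ?_ ?_, by simp⟩
      · intro h
        have h1 : a⁻¹ (b⁻¹ x) = b⁻¹ x := by rw [Equiv.Perm.inv_eq_iff_eq, h]
        rw [h1] at hx; simp [hxa] at hx
      · rw [hinv]; intro h
        apply hxb
        nth_rw 1 [h]; simp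
    · left; left; exact hI x hxa hxb

lemma threeCycle_of_inter {α : Type*} [Fintype α] [DecidableEq α] (a b : Equiv.Perm α) (z : α)
    (ha : a z ≠ z) (hb : b z ≠ z) (h : ∀ y, a y ≠ y → b y ≠ y → y = z) :
    (a * b * a⁻¹ * b⁻¹).IsThreeCycle := by
  set c := a * b * a⁻¹ * b⁻¹ with hc
  rw [← card_support_eq_three_iff]
  have h1 : c.support.card ≤ 3 := by
    have : c.support ⊆ {z} ∪ Finset.image a {z} ∪ Finset.image b {z} := by
      intro x hx
      apply comm_support a b x (Equiv.Perm.mem_support.1 hx)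
      intro y h1 h2; simp [h y h1 h2]
    refine (Finset.card_le_card this).trans ?_
    refine (Finset.card_union_le _ _).trans ?_
    have := Finset.card_union_le {z} (Finset.image a {z})
    simp at this ⊢
    omega
  have hs : Equiv.Perm.sign c = 1 := by
    rw [hc]; simp only [map_mul, map_inv]
    rw [mul_right_comm _ _ (Equiv.Perm.sign a)⁻¹]; simp
  have hne : c ≠ 1 := by
    intro h1
    have h2 : a * b = b * a := by
      rw [hc, mul_inv_eq_one, mul_inv_eq_iff_eq_mul] at h1; exact h1
    have h3 := DFunLike.congr_fun h2 z
    simp only [Equiv.Perm.coe_mul, Function.comp_apply] at h3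
    have h4 : a (b z) = b z := by
      by_contra h5
      exact hb (h _ h5 (fun h6 => hb (b.injective h6)))
    have h5 : b (a z) = a z := by
      by_contra h5
      exact ha (h _ (fun h6 => ha (a.injective h6)) h5)
    rw [h4, h5] at h3
    rw [h3] at h4
    exact ha (a.injective h4)
  have h2 : c.support.card ≠ 2 := by
    intro h2
    rw [Equiv.Perm.card_support_eq_two] at h2
    rw [h2.sign_eq] at hs
    exact absurd hs (by decide)
  have h3 : c.support.card ≠ 0 := by simpa using hne
  have h4 := Equiv.Perm.card_support_ne_one c
  omega

open MulAction Equiv.Perm in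
lemma jordan_of_transitive {α : Type*} [Fintype α] [DecidableEq α] (H : Subgroup (Equiv.Perm α)) (p : ℕ)
    (hp : p.Prime) (hp11 : 11 ≤ p) (hcard : Fintype.card α + 2 = 2 * p)
    (htr : IsPretransitive H α) (h : Equiv.Perm α) (hh : h ∈ H) (hcyc : h.IsCycle)
    (hsup : h.support.card = p) : alternatingGroup α ≤ H := by
  have hinv : ∀ (c : Equiv.Perm α) y, c (c⁻¹ y) = y := fun c y => by simp
  have htr' := isPretransitive_of_isCycle_mem hcyc hh
  have hcardS : Nat.card (SubMulAction.ofFixingSubgroup H (h.support : Set α)ᶜ) = p := by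
    classical
    rw [Nat.card_eq_fintype_card, Fintype.card_subtype, ← hsup]
    apply congr_arg
    ext x
    simp [SubMulAction.mem_ofFixingSubgroup_iff]
  have hprim' : IsPreprimitive (fixingSubgroup H (h.support : Set α)ᶜ)
      (SubMulAction.ofFixingSubgroup H (h.support : Set α)ᶜ) := by
    apply IsPreprimitive.of_prime_card
    rwa [hcardS]
  let φ : fixingSubgroup H (h.support : Set α)ᶜ → H := Subtype.val
  let f : SubMulAction.ofFixingSubgroup H (h.support : Set α)ᶜ →ₑ[φ] α :=
    { toFun := Subtype.val
      map_smul' := fun _ _ ↦ rfl }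
  have hprim : IsPreprimitive H α := by
    apply IsPreprimitive.of_card_lt (f := f)
    have : (Set.range f).ncard = p := by
      rw [← hcardS, ← Set.image_univ, Set.ncard_image_of_injective _
        (show Function.Injective f from Subtype.val_injective), Set.ncard_univ]
    rw [this, Nat.card_eq_fintype_card]; omega
  have hmul : IsMultiplyPreprimitive H α (p - 3 + 2) := by
    apply hprim.isMultiplyPreprimitive (s := (h.support : Set α)ᶜ)
    · have := Set.ncard_add_ncard_compl (h.support : Set α)
      rw [Set.ncard_coe_finset, hsup, Nat.card_eq_fintype_card] at this
      omega
    · rw [Nat.card_eq_fintype_card]; omega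
    · exact hprim'
  have hmt : IsMultiplyPretransitive H α (p - 3 + 2) := hmul.isMultiplyPretransitive
  have hle : p - 3 + 2 ≤ Nat.card α := by rw [Nat.card_eq_fintype_card]; omega
  -- first step
  obtain ⟨Z, hZs, hZc⟩ := Finset.exists_subset_card_eq (s := h.support) (n := p - 2) (by omega)
  have hFc : h.supportᶜ.card = p - 2 := by rw [Finset.card_compl]; omega
  obtain ⟨u, huH, hu⟩ := exists_map_finset
    (isMultiplyPretransitive_of_le (G := H) (m := p - 2) (by omega) hle) h.supportᶜ Z hFc hZc
  set b := u * h * u⁻¹ with hb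
  have hbH : b ∈ H := H.mul_mem (H.mul_mem huH hh) (H.inv_mem huH)
  have hbs : ∀ x, b x ≠ x ↔ x ∉ Z := by
    intro x
    have := hu (u⁻¹ x)
    simp only [hinv, Finset.mem_compl, Equiv.Perm.mem_support, not_not] at this
    rw [this, hb]
    simp only [Equiv.Perm.coe_mul, Function.comp_apply]
    exact not_congr Equiv.Perm.eq_inv_iff_eq.symm
  have hI : (h.support \ Z).card = 2 := by
    rw [Finset.card_sdiff_of_subset hZs]; omega
  obtain ⟨y, z, hyz, hIyz⟩ := Finset.card_eq_two.1 hI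
  have hmemI : ∀ w, (h w ≠ w ∧ b w ≠ w) ↔ (w = y ∨ w = z) := by
    intro w
    have := Finset.ext_iff.1 hIyz w
    simp only [Finset.mem_sdiff, Equiv.Perm.mem_support, Finset.mem_insert, Finset.mem_singleton]
      at this
    rw [← this, hbs]
  set c := h * b * h⁻¹ * b⁻¹ with hc
  have hcH : c ∈ H := H.mul_mem (H.mul_mem (H.mul_mem hh hbH) (H.inv_mem hh)) (H.inv_mem hbH)
  have hbp : b ^ p = 1 := by
    rw [hb, conj_pow, ← hsup, ← hcyc.orderOf, pow_orderOf_eq_one]; simp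
  have hex : ∃ w, (w = y ∨ w = z) ∧ ¬ (b w = y ∨ b w = z) := by
    by_contra hcon
    push Not at hcon
    have hy := (hmemI y).2 (Or.inl rfl)
    have hz := (hmemI z).2 (Or.inr rfl)
    have h1 : b y = z := (hcon y (Or.inl rfl)).resolve_left hy.2
    have h2 : b z = y := (hcon z (Or.inr rfl)).resolve_right hz.2
    have h3 : ∀ k : ℕ, (b ^ (2 * k)) y = y := by
      intro k
      induction k with
      | zero => simp
      | succ k ih =>
        rw [show 2 * (k+1) = 2 * k + 2 by ring, pow_add]
        simp [pow_two, h1, h2, ih]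
    have hodd : Odd p := hp.odd_of_ne_two (by omega)
    obtain ⟨k, hk⟩ := hodd
    have h4 : (b ^ p) y = y := by rw [hbp]; simp
    rw [hk, pow_succ'] at h4
    simp only [Equiv.Perm.coe_mul, Function.comp_apply, h3] at h4
    exact hy.2 h4
  have hcne : c ≠ 1 := by
    intro h1
    have h2 : h * b = b * h := by
      rw [hc, mul_inv_eq_one, mul_inv_eq_iff_eq_mul] at h1; exact h1
    obtain ⟨w, hw, hbw⟩ := hex
    have hw' := (hmemI w).2 hw
    rw [← hmemI] at hbw
    have h3 : h (b w) = b w := by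
      by_contra h5
      exact hbw ⟨h5, fun h6 => hw'.2 (b.injective h6)⟩
    have h4 := DFunLike.congr_fun h2 w
    simp only [Equiv.Perm.coe_mul, Function.comp_apply] at h4
    rw [h3] at h4
    exact hw'.1 (b.injective h4).symm
  have hc6 : c.support.card ≤ 6 := by
    have : c.support ⊆ {y, z} ∪ Finset.image h {y, z} ∪ Finset.image b {y, z} := by
      intro x hx
      apply comm_support h b x (Equiv.Perm.mem_support.1 hx)
      intro w h1 h2; simpa using (hmemI w).1 ⟨h1, h2⟩
    refine (Finset.card_le_card this).trans ?_
    refine (Finset.card_union_le _ _).trans ?_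
    have h1 := Finset.card_union_le {y, z} (Finset.image h {y, z})
    have h2 := Finset.card_le_two (a := y) (b := z)
    have h3 := Finset.card_image_le (s := {y, z}) (f := h)
    have h4 := Finset.card_image_le (s := {y, z}) (f := b)
    omega
  -- second step
  obtain ⟨w, hw⟩ : c.support.Nonempty := by
    rw [Finset.nonempty_iff_ne_empty]; simpa using hcne
  obtain ⟨W, hWs, hWc⟩ := Finset.exists_subset_card_eq (s := c.supportᶜ) (n := c.support.card - 1)
    (by rw [Finset.card_compl]; omega)
  have hpos : 0 < c.support.card := Finset.card_pos.2 ⟨w, hw⟩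
  have hwW : w ∉ W := fun h => by simpa [hw] using! Finset.mem_compl.1 (hWs h) hw
  have hBc : (insert w W).card = c.support.card := by
    rw [Finset.card_insert_of_notMem hwW]; omega
  obtain ⟨v, hvH, hv⟩ := exists_map_finset
    (isMultiplyPretransitive_of_le (G := H) (m := c.support.card) (by omega) hle) c.support
      (insert w W) rfl hBc
  set d := v * c * v⁻¹ with hd
  have hdH : d ∈ H := H.mul_mem (H.mul_mem hvH hcH) (H.inv_mem hvH)
  have hds : ∀ x, d x ≠ x ↔ x ∈ insert w W := by
    intro x
    have := hv (v⁻¹ x)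
    rw [hinv, Equiv.Perm.mem_support] at this
    rw [this, hd]
    simp only [Equiv.Perm.coe_mul, Function.comp_apply]
    exact not_congr Equiv.Perm.eq_inv_iff_eq.symm
  have h3 := threeCycle_of_inter c d w (by simpa using hw) ((hds w).2 (by simp)) (by
    intro y hy1 hy2
    rw [hds, Finset.mem_insert] at hy2
    refine hy2.resolve_right fun h => ?_
    have := hWs h
    rw [Finset.mem_compl, Equiv.Perm.mem_support] at this
    exact this hy1)
  exact alternatingGroup_le_of_isPreprimitive_of_isThreeCycle_mem hprim h3
    (H.mul_mem (H.mul_mem (H.mul_mem hcH hdH) (H.inv_mem hcH)) (H.inv_mem hdH))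


lemma pi_top_of_unlinked {T : Type*} [Group T] [Finite T] [IsSimpleGroup T]
    (hna : ∃ a b : T, a * b ≠ b * a) {ι : Type*} [Fintype ι] [DecidableEq ι]
    (H : Subgroup (ι → T)) (hsurj : ∀ i (t : T), ∃ h ∈ H, h i = t)
    (hlink : ∀ i j, i ≠ j → ∀ φ : MulAut T, ∃ h ∈ H, h i ≠ φ (h j)) : H = ⊤ := by
  -- the normal subgroup of i-th coordinates of elements trivial on S
  let A : ι → Finset ι → Subgroup T := fun i S =>
    { carrier := {t | ∃ h ∈ H, h i = t ∧ ∀ j ∈ S, h j = 1}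
      one_mem' := ⟨1, H.one_mem, rfl, fun _ _ => rfl⟩
      mul_mem' := by
        rintro a b ⟨h, hh, rfl, h1⟩ ⟨k, hk, rfl, k1⟩
        exact ⟨h * k, H.mul_mem hh hk, rfl, fun j hj => by simp [h1 j hj, k1 j hj]⟩
      inv_mem' := by
        rintro a ⟨h, hh, rfl, h1⟩
        exact ⟨h⁻¹, H.inv_mem hh, rfl, fun j hj => by simp [h1 j hj]⟩ }
  have hAn : ∀ i S, (A i S).Normal := by
    intro i S
    constructor
    rintro t ⟨h, hh, rfl, h1⟩ s
    obtain ⟨k, hk, rfl⟩ := hsurj i s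
    exact ⟨k * h * k⁻¹, H.mul_mem (H.mul_mem hk hh) (H.inv_mem hk), rfl,
      fun j hj => by simp [h1 j hj]⟩
  have hpair : ∀ i j, i ≠ j → A i {j} = ⊤ := by
    intro i j hij
    rcases (hAn i {j}).eq_bot_or_eq_top with h | h
    · exfalso
      let πi : H →* T := (Pi.evalMonoidHom (fun _ : ι => T) i).comp H.subtype
      let πj : H →* T := (Pi.evalMonoidHom (fun _ : ι => T) j).comp H.subtype
      have hsi : Function.Surjective πi := fun t => by
        obtain ⟨k, hk, h⟩ := hsurj i t; exact ⟨⟨k, hk⟩, h⟩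
      have hsj : Function.Surjective πj := fun t => by
        obtain ⟨k, hk, h⟩ := hsurj j t; exact ⟨⟨k, hk⟩, h⟩
      have hker : πj.ker ≤ πi.ker := by
        rintro ⟨k, hk⟩ hkk
        rw [MonoidHom.mem_ker] at hkk ⊢
        have : k i ∈ A i {j} := ⟨k, hk, rfl, fun l hl => by
          rw [Finset.mem_singleton] at hl; subst hl; exact hkk⟩
        rw [h, Subgroup.mem_bot] at this
        exact this
      let φ : T →* T := MonoidHom.liftOfSurjective πj hsj ⟨πi, hker⟩
      have hφ : ∀ x, φ (πj x) = πi x := fun x =>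
        MonoidHom.liftOfRightInverse_comp_apply πj _ _ ⟨πi, hker⟩ x
      have hφs : Function.Surjective φ := fun t => by
        obtain ⟨x, rfl⟩ := hsi t; exact ⟨πj x, hφ x⟩
      have hφb : Function.Bijective φ := Function.Surjective.bijective_of_finite hφs
      obtain ⟨k, hk, hne⟩ := hlink i j hij (MulEquiv.ofBijective φ hφb)
      exact hne (hφ ⟨k, hk⟩).symm
    · exact h
  have hall : ∀ i (S : Finset ι), i ∉ S → A i S = ⊤ := by
    intro i S
    induction S using Finset.induction_on with
    | empty =>
      intro _
      rw [eq_top_iff]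
      rintro t -
      obtain ⟨h, hh, h1⟩ := hsurj i t
      exact ⟨h, hh, h1, by simp⟩
    | insert j S hj ih =>
      intro hi
      rw [Finset.mem_insert, not_or] at hi
      have h1 := ih hi.2
      have h2 := hpair i j hi.1
      rcases (hAn i (insert j S)).eq_bot_or_eq_top with h | h
      · exfalso
        obtain ⟨a, b, hab⟩ := hna
        have ha : a ∈ A i S := by rw [h1]; trivial
        have hb : b ∈ A i {j} := by rw [h2]; trivial
        obtain ⟨x, hx, rfl, hx1⟩ := ha
        obtain ⟨y, hy, rfl, hy1⟩ := hb
        have : x i * y i * (x i)⁻¹ * (y i)⁻¹ ∈ A i (insert j S) := by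
          refine ⟨x * y * x⁻¹ * y⁻¹, H.mul_mem (H.mul_mem (H.mul_mem hx hy) (H.inv_mem hx))
            (H.inv_mem hy), rfl, fun l hl => ?_⟩
          rw [Finset.mem_insert] at hl
          rcases hl with rfl | hl
          · simp [hy1 l (by simp)]
          · simp [hx1 l hl]
        rw [h, Subgroup.mem_bot, mul_inv_eq_one, mul_inv_eq_iff_eq_mul] at this
        exact hab this
      · exact h
  rw [eq_top_iff]
  rintro t -
  have hsingle : ∀ i (s : T), Pi.mulSingle i s ∈ H := by
    intro i s
    have : s ∈ A i (Finset.univ.erase i) := by rw [hall i _ (by simp)]; trivial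
    obtain ⟨h, hh, h1, h2⟩ := this
    have : Pi.mulSingle i s = h := by
      funext j
      by_cases hj : j = i
      · subst hj; simp [h1]
      · rw [Pi.mulSingle_eq_of_ne hj, h2 j (by simp [hj])]
    rw [this]; exact hh
  exact Subgroup.pi_mem_of_mulSingle_mem t fun i => hsingle i (t i)

/-- closure of `{const g, x}` in the power is everything under non-link conditions -/
lemma closure_pi_eq_top {T : Type*} [Group T] [Finite T] [IsSimpleGroup T]
    (hna : ∃ a b : T, a * b ≠ b * a) {ι : Type*} [Fintype ι] [DecidableEq ι]
    (g : T) (x : ι → T) (h1 : ∀ i, closure {g, x i} = ⊤)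
    (h2 : ∀ i j, i ≠ j → ∀ φ : MulAut T, φ g = g → x i ≠ φ (x j)) :
    closure {(fun _ => g : ι → T), x} = ⊤ := by
  apply pi_top_of_unlinked hna
  · intro i t
    have : (closure {(fun _ => g : ι → T), x}).map (Pi.evalMonoidHom (fun _ : ι => T) i) = ⊤ := by
      rw [MonoidHom.map_closure, Set.image_pair]
      exact h1 i
    have ht : t ∈ (closure {(fun _ => g : ι → T), x}).map (Pi.evalMonoidHom (fun _ : ι => T) i) := by
      rw [this]; trivial
    exact ht
  · intro i j hij φ
    by_cases hg : φ g = g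
    · exact ⟨x, subset_closure (by simp), h2 i j hij φ hg⟩
    · exact ⟨_, subset_closure (Set.mem_insert _ _), fun h => hg h.symm⟩

lemma card_pi_fiber {T : Type*} [Fintype T] {N : ℕ} (i : Fin (N + 1)) (P : T → Prop) [DecidablePred P] :
    Fintype.card {x : Fin (N+1) → T // P (x i)} = Fintype.card {t // P t} * Fintype.card T ^ N := by
  have hT : Fintype.card T ^ N = Fintype.card (Fin N → T) := by simp
  rw [hT, ← Fintype.card_prod]
  apply Fintype.card_congr
  exact
    { toFun := fun x => (⟨x.1 i, x.2⟩, fun j => x.1 (i.succAbove j))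
      invFun := fun y => ⟨i.insertNth y.1.1 y.2, by simpa using y.1.2⟩
      left_inv := fun x => by ext j; exact congrFun (Fin.insertNth_self_removeNth i x.1) j
      right_inv := fun y => by ext <;> simp }

open Classical in
lemma bad_card {T : Type*} [Group T] [Fintype T] [IsSimpleGroup T]
    (hna : ∃ a b : T, a * b ≠ b * a) (g : T) (N : ℕ) :
    Fintype.card {x : Fin (N+1) → T // closure {(fun _ => g : Fin (N+1) → T), x} ≠ ⊤} ≤
      ((N+1) * Fintype.card {t : T // closure {g, t} ≠ ⊤} +
        (N+1)^2 * Nat.card {φ : MulAut T // φ g = g}) * Fintype.card T ^ N := by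
  let Φ := {φ : MulAut T // φ g = g}
  change _ ≤ (_ + (N+1)^2 * Nat.card Φ) * _
  have : Fintype Φ := Fintype.ofFinite _
  rw [Nat.card_eq_fintype_card]
  have hcov : (Finset.univ.filter fun x : Fin (N+1) → T =>
        closure {(fun _ => g : Fin (N+1) → T), x} ≠ ⊤) ⊆
      (Finset.univ.biUnion fun i : Fin (N+1) => Finset.univ.filter fun x : Fin (N+1) → T =>
        closure {g, x i} ≠ ⊤) ∪
      ((Finset.univ.filter fun ij : Fin (N+1) × Fin (N+1) => ij.1 ≠ ij.2).biUnion fun ij =>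
        Finset.univ.biUnion fun φ : Φ =>
        Finset.univ.filter fun x : Fin (N+1) → T => x ij.1 = φ.1 (x ij.2)) := by
    intro x hx
    simp only [Finset.mem_filter, Finset.mem_univ, true_and] at hx
    by_contra hcon
    simp only [Finset.mem_union, Finset.mem_biUnion, Finset.mem_filter, Finset.mem_univ, true_and,
      not_or, not_exists, not_not, not_and] at hcon
    apply hx
    apply closure_pi_eq_top hna g x hcon.1
    intro i j hij φ hφ
    exact hcon.2 (i, j) hij ⟨φ, hφ⟩
  have h2 : ∀ (i j : Fin (N+1)), i ≠ j → ∀ φ : Φ,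
      (Finset.univ.filter fun x : Fin (N+1) → T => x i = φ.1 (x j)).card ≤ Fintype.card T ^ N := by
    intro i j hij φ
    have hT : Fintype.card T ^ N = Fintype.card (Fin N → T) := by simp
    rw [hT, ← Finset.card_univ]
    apply Finset.card_le_card_of_injOn (fun x k => x (i.succAbove k)) (by simp)
    intro x hx y hy hxy
    simp only [Finset.coe_filter, Finset.mem_univ, true_and, Set.mem_setOf_eq] at hx hy
    have hne : ∀ k, k ≠ i → x k = y k := by
      intro k hk
      obtain ⟨l, rfl⟩ := Fin.exists_succAbove_eq hk
      exact congrFun hxy l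
    funext k
    by_cases hk : k = i
    · subst hk; rw [hx, hy, hne j hij.symm]
    · exact hne k hk
  rw [Fintype.card_subtype]
  refine (Finset.card_le_card hcov).trans ((Finset.card_union_le _ _).trans ?_)
  rw [add_mul]
  apply add_le_add
  · refine Finset.card_biUnion_le.trans ?_
    have : ∀ i : Fin (N+1), (Finset.univ.filter fun x : Fin (N+1) → T => closure {g, x i} ≠ ⊤).card
        = Fintype.card {t : T // closure {g, t} ≠ ⊤} * Fintype.card T ^ N := by
      intro i
      rw [← card_pi_fiber i (fun t => closure {g, t} ≠ ⊤), Fintype.card_subtype]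
    simp only [this]
    simp [mul_assoc]
  · refine (Finset.card_biUnion_le_card_mul _ _ (Fintype.card Φ * Fintype.card T ^ N) ?_).trans ?_
    · intro ij hij
      refine (Finset.card_biUnion_le_card_mul _ _ (Fintype.card T ^ N) ?_).trans (by simp)
      intro φ _
      exact h2 _ _ (by simpa using hij) φ
    · rw [mul_assoc]
      apply Nat.mul_le_mul_right
      refine (Finset.card_filter_le _ _).trans ?_
      simp [pow_two]


lemma one_sub_genProb {G : Type*} [Group G] [Fintype G] (Y : Set G) (n : ℕ) :
    1 - genProb G Y n = (Nat.card {v : Fin n → G // closure (Y ∪ Set.range v) ≠ ⊤} : ℝ) /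
      (Nat.card G : ℝ) ^ n := by
  classical
  have h0 : ((Nat.card G : ℝ)) ^ n ≠ 0 := by
    have : 0 < Nat.card G := Nat.card_pos
    positivity
  have h : Nat.card {v : Fin n → G // closure (Y ∪ Set.range v) = ⊤} +
      Nat.card {v : Fin n → G // closure (Y ∪ Set.range v) ≠ ⊤} = Nat.card G ^ n := by
    simp only [Nat.card_eq_fintype_card]
    have := Fintype.card_subtype_compl (fun v : Fin n → G => closure (Y ∪ Set.range v) = ⊤)
    have h2 := Fintype.card_subtype_le (fun v : Fin n → G => closure (Y ∪ Set.range v) = ⊤)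
    have h3 : Fintype.card (Fin n → G) = Fintype.card G ^ n := by simp
    have h4 : Fintype.card {v : Fin n → G // closure (Y ∪ Set.range v) ≠ ⊤} =
      Fintype.card {v : Fin n → G // ¬ closure (Y ∪ Set.range v) = ⊤} := rfl
    omega
  unfold genProb
  rw [eq_div_iff h0, sub_mul, div_mul_cancel₀ _ h0, one_mul]
  have h' : (Nat.card {v : Fin n → G // closure (Y ∪ Set.range v) = ⊤} : ℝ) +
      Nat.card {v : Fin n → G // closure (Y ∪ Set.range v) ≠ ⊤} = (Nat.card G : ℝ) ^ n := by
    exact_mod_cast h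
  linarith

lemma card_all_bad {G : Type*} [Fintype G] (n : ℕ) (Q : G → Prop) :
    Nat.card {v : Fin n → G // ∀ i, Q (v i)} = Nat.card {x // Q x} ^ n := by
  classical
  rw [Nat.card_congr (Equiv.subtypePiEquivPi (p := fun _ => Q)), Nat.card_pi]
  simp

lemma summable_fail {G : Type*} [Group G] [Fintype G] :
    Summable fun n => 1 - genProb G ∅ n := by
  classical
  have hpos : 0 < Fintype.card G := Fintype.card_pos
  have hc : (0:ℝ) < Fintype.card G := by exact_mod_cast hpos
  have hr0 : 0 ≤ ((Fintype.card G : ℝ) - 1) / Fintype.card G := by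
    apply div_nonneg _ hc.le
    have : (1:ℝ) ≤ Fintype.card G := by exact_mod_cast hpos
    linarith
  have hr1 : ((Fintype.card G : ℝ) - 1) / Fintype.card G < 1 := by
    rw [div_lt_one hc]; linarith
  refine Summable.of_nonneg_of_le (f := fun n => (Fintype.card G : ℝ) *
    (((Fintype.card G : ℝ) - 1) / Fintype.card G) ^ n) ?_ ?_
    ((summable_geometric_of_lt_one hr0 hr1).mul_left _)
  · intro n; rw [one_sub_genProb]; positivity
  · intro n
    rw [one_sub_genProb, div_pow, mul_div_assoc', Nat.card_eq_fintype_card (α := G)]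
    apply div_le_div_of_nonneg_right _ (by positivity)
    have h1 : Nat.card {v : Fin n → G // closure (∅ ∪ Set.range v) ≠ ⊤} ≤
        Fintype.card G * (Fintype.card G - 1) ^ n := by
      rw [Nat.card_eq_fintype_card, Fintype.card_subtype]
      have : (Finset.univ.filter fun v : Fin n → G => closure (∅ ∪ Set.range v) ≠ ⊤) ⊆
          Finset.univ.biUnion fun y : G => Finset.univ.filter fun v : Fin n → G => ∀ i, v i ≠ y := by
        intro v hv
        simp only [Finset.mem_filter, Finset.mem_univ, true_and] at hv
        by_contra hcon
        simp only [Finset.mem_biUnion, Finset.mem_filter, Finset.mem_univ, true_and, not_exists,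
          not_forall, not_not] at hcon
        apply hv
        have : Set.range v = Set.univ := Set.range_eq_univ.2 hcon
        simp [this]
      refine (Finset.card_le_card this).trans ?_
      refine (Finset.card_biUnion_le_card_mul _ _ ((Fintype.card G - 1)^n) ?_).trans (by simp)
      intro y _
      rw [← Fintype.card_subtype, ← Nat.card_eq_fintype_card, card_all_bad n (fun x => x ≠ y)]
      apply le_of_eq
      simp [Nat.card_eq_fintype_card]
    calc (Nat.card {v : Fin n → G // closure (∅ ∪ Set.range v) ≠ ⊤} : ℝ)
        ≤ ((Fintype.card G * (Fintype.card G - 1) ^ n : ℕ) : ℝ) := by exact_mod_cast h1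
      _ = _ := by push_cast [Nat.cast_sub hpos]; simp

lemma eTime_le_two {G : Type*} [Group G] [Fintype G] (g : G)
    (h : 2 * Nat.card {x : G // closure {g, x} ≠ ⊤} ≤ Nat.card G) : eTime G {g} ≤ 2 := by
  classical
  have hpos : 0 < Nat.card G := Nat.card_pos
  have hc : (0:ℝ) < Nat.card G := by exact_mod_cast hpos
  have hle : ∀ n, 1 - genProb G {g} n ≤ (1/2 : ℝ)^n := by
    intro n
    rw [one_sub_genProb, div_le_iff₀ (by positivity), ← mul_pow]
    have h1 : Nat.card {v : Fin n → G // closure ({g} ∪ Set.range v) ≠ ⊤} ≤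
        Nat.card {x : G // closure {g, x} ≠ ⊤} ^ n := by
      rw [← card_all_bad]
      apply Nat.card_le_card_of_injective (Subtype.map id ?_) (Subtype.map_injective _ Function.injective_id)
      intro v hv i hcon
      apply hv
      rw [eq_top_iff, ← hcon]
      apply Subgroup.closure_mono
      rintro y (rfl | rfl)
      · left; rfl
      · right; exact ⟨i, rfl⟩
    have h2 : (Nat.card {x : G // closure {g, x} ≠ ⊤} : ℝ) ≤ 1/2 * Nat.card G := by
      have : (2 * Nat.card {x : G // closure {g, x} ≠ ⊤} : ℝ) ≤ Nat.card G := by exact_mod_cast h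
      linarith
    calc (Nat.card {v : Fin n → G // closure ({g} ∪ Set.range v) ≠ ⊤} : ℝ)
        ≤ (Nat.card {x : G // closure {g, x} ≠ ⊤} : ℝ)^n := by exact_mod_cast h1
      _ ≤ _ := pow_le_pow_left₀ (by positivity) h2 n
  unfold eTime
  rw [← tsum_geometric_two]
  apply Summable.tsum_le_tsum hle _ summable_geometric_two
  exact Summable.of_nonneg_of_le (fun n => by rw [one_sub_genProb]; positivity) hle
    summable_geometric_two

lemma eTime_ge {G : Type*} [Group G] [Fintype G] (n : ℕ)
    (h : ∀ k < 2 * n, genProb G ∅ k ≤ 1/2) : (n : ℝ) ≤ eTime G ∅ := by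
  unfold eTime
  refine le_trans ?_ (Summable.sum_le_tsum (Finset.range (2*n)) (fun k _ => ?_) summable_fail)
  · calc (n:ℝ) = ∑ k ∈ Finset.range (2*n), (1/2 : ℝ) := by simp; ring
      _ ≤ _ := Finset.sum_le_sum fun k hk => by
        have := h k (by simpa using hk); linarith
  · rw [one_sub_genProb]; positivity

lemma genProb_pi_le {T : Type*} [Group T] [Fintype T] (S : Subgroup T) (hS : S ≠ ⊤) (m N : ℕ)
    (hSm : Nat.card T ≤ m * Nat.card S) (k : ℕ) (hN : m ^ k ≤ N) (hm : 0 < m) :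
    genProb (Fin N → T) ∅ k ≤ 1/2 := by
  classical
  have hTpos : (0:ℝ) < Nat.card T := by exact_mod_cast Nat.card_pos
  have hNpos : 0 < N := lt_of_lt_of_le (by positivity) hN
  unfold genProb
  have h1 : Nat.card {v : Fin k → Fin N → T // closure (∅ ∪ Set.range v) = ⊤} ≤
      (Nat.card {w : Fin k → T // ¬ ∀ i, w i ∈ S}) ^ N := by
    rw [← card_all_bad]
    apply Nat.card_le_card_of_injective
      (fun v => (⟨fun j i => v.1 i j, ?_⟩ :
        {u : Fin N → Fin k → T // ∀ j, ¬ ∀ i, u j i ∈ S}))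
    · intro v w hvw
      ext i j
      exact congrFun (congrFun (congrArg Subtype.val hvw) j) i
    · intro j hcon
      apply hS
      have hle : closure (∅ ∪ Set.range v.1) ≤ S.comap (Pi.evalMonoidHom (fun _ : Fin N => T) j) := by
        rw [closure_le]
        rintro x (hx | ⟨i, rfl⟩)
        · exact hx.elim
        · exact hcon i
      rw [v.2, top_le_iff] at hle
      rw [eq_top_iff]
      rintro t -
      have : (fun _ => t : Fin N → T) ∈ S.comap (Pi.evalMonoidHom (fun _ : Fin N => T) j) := by
        rw [hle]; trivial
      exact this
  have h2 : (Nat.card {w : Fin k → T // ¬ ∀ i, w i ∈ S} : ℝ) =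
      (Nat.card T : ℝ)^k - (Nat.card S : ℝ)^k := by
    have e1 : Nat.card {w : Fin k → T // ∀ i, w i ∈ S} = Nat.card S ^ k :=
      card_all_bad k (fun x => x ∈ S)
    have e2 := Fintype.card_subtype_compl (fun w : Fin k → T => ∀ i, w i ∈ S)
    have e3 := Fintype.card_subtype_le (fun w : Fin k → T => ∀ i, w i ∈ S)
    rw [← Nat.card_eq_fintype_card, ← Nat.card_eq_fintype_card, ← Nat.card_eq_fintype_card, e1] at e2
    rw [← Nat.card_eq_fintype_card, ← Nat.card_eq_fintype_card, e1] at e3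
    rw [e2, Nat.cast_sub e3]
    simp
  have h3 : (Nat.card {w : Fin k → T // ¬ ∀ i, w i ∈ S} : ℝ) ≤
      (1 - 1 / N) * (Nat.card T : ℝ)^k := by
    rw [h2, sub_mul, one_mul]
    apply sub_le_sub_left
    rw [div_mul_eq_mul_div, one_mul, div_le_iff₀ (by exact_mod_cast hNpos)]
    have e : Nat.card T ^ k ≤ Nat.card S ^ k * N :=
      calc Nat.card T ^ k ≤ (m * Nat.card S)^k := Nat.pow_le_pow_left hSm k
        _ = Nat.card S ^ k * m ^ k := by rw [mul_pow, mul_comm]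
        _ ≤ _ := Nat.mul_le_mul_left _ hN
    exact_mod_cast e
  have hcard : (Nat.card (Fin N → T) : ℝ)^k = ((Nat.card T : ℝ)^k)^N := by
    rw [Nat.card_pi]; simp [← pow_mul, mul_comm]
  rw [hcard, div_le_iff₀ (by positivity)]
  have hN1 : (1:ℝ) ≤ N := by exact_mod_cast hNpos
  have h4 : (1 - 1 / N : ℝ)^N ≤ 1/2 := by
    have h0 : (0:ℝ) ≤ 1 - 1/N := by
      rw [sub_nonneg, div_le_one (by linarith)]; exact hN1
    calc (1 - 1 / N : ℝ)^N ≤ (Real.exp (-(1/N)))^N :=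
          pow_le_pow_left₀ h0 (Real.one_sub_le_exp_neg _) N
      _ = Real.exp (-1) := by
          rw [← Real.exp_nat_mul]; congr 1; field_simp
      _ ≤ 1/2 := by
          rw [Real.exp_neg, one_div]
          apply inv_anti₀ (by norm_num)
          have := Real.add_one_le_exp (1:ℝ); linarith
  calc (Nat.card {v : Fin k → Fin N → T // closure (∅ ∪ Set.range v) = ⊤} : ℝ)
      ≤ (Nat.card {w : Fin k → T // ¬ ∀ i, w i ∈ S} : ℝ) ^ N := by exact_mod_cast h1
    _ ≤ ((1 - 1 / N) * (Nat.card T : ℝ)^k)^N := pow_le_pow_left₀ (by positivity) h3 N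
    _ ≤ _ := by rw [mul_pow]; exact mul_le_mul_of_nonneg_right h4 (by positivity)


/-- The product of a `p`-cycle and a `q`-cycle. -/
def gPerm (p q : ℕ) : Equiv.Perm (ZMod p ⊕ ZMod q) :=
  Equiv.Perm.sumCongr (Equiv.addRight 1) (Equiv.addRight 1)

lemma gPerm_pow_inl (p q k : ℕ) (a : ZMod p) : (gPerm p q ^ k) (Sum.inl a) = Sum.inl (a + k) := by
  induction k with
  | zero => simp
  | succ k ih =>
    rw [pow_succ', Equiv.Perm.mul_apply, ih]
    simp [gPerm, add_assoc]

lemma gPerm_pow_inr (p q k : ℕ) (a : ZMod q) : (gPerm p q ^ k) (Sum.inr a) = Sum.inr (a + k) := by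
  induction k with
  | zero => simp
  | succ k ih =>
    rw [pow_succ', Equiv.Perm.mul_apply, ih]
    simp [gPerm, add_assoc]

lemma gPerm_pow_mul (p q : ℕ) : gPerm p q ^ (p * q) = 1 := by
  ext x
  rcases x with a | a
  · rw [gPerm_pow_inl]; simp
  · rw [gPerm_pow_inr]; simp

lemma gPerm_order (p q : ℕ) [hp : Fact p.Prime] (hq : q + 2 = p) (hp11 : 11 ≤ p) :
    orderOf (gPerm p q ^ q) = p := by
  apply orderOf_eq_prime
  · rw [← pow_mul, mul_comm, gPerm_pow_mul]
  · intro h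
    have h2 := congrArg (fun s => s (Sum.inl 0)) h
    simp only [gPerm_pow_inl, zero_add, Equiv.Perm.one_apply, Sum.inl.injEq] at h2
    rw [ZMod.natCast_eq_zero_iff] at h2
    have := Nat.le_of_dvd (by omega) h2
    omega

lemma gPerm_mem (p q : ℕ) [Fact p.Prime] [NeZero q] (hq : q + 2 = p) (hp11 : 11 ≤ p) :
    gPerm p q ∈ alternatingGroup (ZMod p ⊕ ZMod q) := by
  rw [Equiv.Perm.mem_alternatingGroup]
  have hodd : Odd p := (Fact.out : p.Prime).odd_of_ne_two (by omega)
  have hoq : Odd (p * q) := by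
    refine hodd.mul ?_
    rw [← hq] at hodd
    obtain ⟨k, hk⟩ := hodd
    exact ⟨k - 1, by omega⟩
  have h := congrArg Equiv.Perm.sign (gPerm_pow_mul p q)
  rw [map_pow, map_one] at h
  rcases Int.units_eq_one_or (Equiv.Perm.sign (gPerm p q)) with h1 | h1
  · exact h1
  · rw [h1, hoq.neg_one_pow] at h
    exact absurd h (by decide)

lemma cyc_of_order {p q : ℕ} [hp : Fact p.Prime] [NeZero q] (hq : q + 2 = p) (_hp11 : 11 ≤ p)
    (x : Equiv.Perm (ZMod p ⊕ ZMod q)) (hx : orderOf x = p) : x.IsCycle := by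
  apply Equiv.Perm.isCycle_of_prime_order'
  · rw [hx]; exact hp.out
  · rw [hx, Fintype.card_sum, ZMod.card, ZMod.card]; omega

open MulAction Pointwise in
lemma top_of_moves {p q : ℕ} [hp : Fact p.Prime] [NeZero q] (hq : q + 2 = p) (hp11 : 11 ≤ p)
    (g x : alternatingGroup (ZMod p ⊕ ZMod q)) (hg : g.1 = gPerm p q)
    (hx : ¬ Set.MapsTo x.1 (Set.range Sum.inl) (Set.range Sum.inl)) :
    closure {g, x} = ⊤ := by
  set H : Subgroup (Equiv.Perm (ZMod p ⊕ ZMod q)) :=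
    (closure {g, x}).map (alternatingGroup (ZMod p ⊕ ZMod q)).subtype with hH
  have hgH : gPerm p q ∈ H := ⟨g, subset_closure (by simp), hg⟩
  have hxH : x.1 ∈ H := ⟨x, subset_closure (by simp), rfl⟩
  have htr : IsPretransitive H (ZMod p ⊕ ZMod q) := by
    apply IsPretransitive.of_partition (s := Set.range Sum.inl)
    · rintro _ ⟨a, rfl⟩ _ ⟨b, rfl⟩
      refine ⟨⟨gPerm p q ^ (b - a).val, H.pow_mem hgH _⟩, ?_⟩
      change (gPerm p q ^ (b - a).val) (Sum.inl a) = _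
      rw [gPerm_pow_inl]; simp
    · rintro (a | a) ha (b | b) hb
      · simp at ha
      · simp at ha
      · simp at hb
      refine ⟨⟨gPerm p q ^ (b - a).val, H.pow_mem hgH _⟩, ?_⟩
      change (gPerm p q ^ (b - a).val) (Sum.inr a) = _
      rw [gPerm_pow_inr]; simp
    · intro hst
      apply hx
      have : (⟨x.1, hxH⟩ : H) ∈ stabilizer H (Set.range (Sum.inl : ZMod p → ZMod p ⊕ ZMod q)) := by
        rw [hst]; trivial
      rw [mem_stabilizer_iff] at this
      intro y hy
      rw [← this]
      exact ⟨y, hy, rfl⟩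
  have hord := gPerm_order p q hq hp11
  have hc := cyc_of_order hq hp11 _ hord
  have hle : alternatingGroup (ZMod p ⊕ ZMod q) ≤ H := by
    apply jordan_of_transitive H p hp.out hp11 _ htr (gPerm p q ^ q) (H.pow_mem hgH _) hc
    · rw [← hc.orderOf, hord]
    · rw [Fintype.card_sum, ZMod.card, ZMod.card]; omega
  rw [eq_top_iff]
  rintro t -
  obtain ⟨u, hu, hut⟩ := hle t.2
  have : u = t := Subtype.ext hut
  rwa [← this]

lemma card_B {p q : ℕ} [hp : Fact p.Prime] [NeZero q] (hq : q + 2 = p) (hp11 : 11 ≤ p)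
    (g : alternatingGroup (ZMod p ⊕ ZMod q)) (hg : g.1 = gPerm p q) :
    Nat.card {t : alternatingGroup (ZMod p ⊕ ZMod q) // closure {g, t} ≠ ⊤} ≤
      p.factorial * q.factorial := by
  have h1 : Nat.card {t : alternatingGroup (ZMod p ⊕ ZMod q) // closure {g, t} ≠ ⊤} ≤
      Nat.card (Equiv.Perm.sumCongrHom (ZMod p) (ZMod q)).range := by
    apply Nat.card_le_card_of_injective
      (fun t => ⟨t.1.1, Equiv.Perm.mem_sumCongrHom_range_of_perm_mapsTo_inl (by
        by_contra h
        exact t.2 (top_of_moves hq hp11 g t.1 hg h))⟩)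
    intro a b hab
    exact Subtype.ext (Subtype.ext (congrArg (fun z => z.1) hab))
  refine h1.trans_eq ?_
  rw [Nat.card_congr (MonoidHom.ofInjective Equiv.Perm.sumCongrHom_injective).symm.toEquiv,
    Nat.card_prod, Nat.card_perm, Nat.card_perm, Nat.card_zmod, Nat.card_zmod]

lemma exists_c {p q : ℕ} [hp : Fact p.Prime] [NeZero q] (hq : q + 2 = p) (hp11 : 11 ≤ p)
    (g : alternatingGroup (ZMod p ⊕ ZMod q)) (hg : g.1 = gPerm p q) :
    ∃ c : alternatingGroup (ZMod p ⊕ ZMod q), orderOf c = p ∧ closure {g, c} = ⊤ := by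
  set s : Equiv.Perm (ZMod p ⊕ ZMod q) := Equiv.swap (Sum.inl 0) (Sum.inr 0) with hs
  have hcm : s * gPerm p q ^ q * s⁻¹ ∈ alternatingGroup (ZMod p ⊕ ZMod q) :=
    (inferInstance : (alternatingGroup (ZMod p ⊕ ZMod q)).Normal).conj_mem _
      (pow_mem (gPerm_mem p q hq hp11) _) s
  refine ⟨⟨_, hcm⟩, ?_, ?_⟩
  · rw [Subgroup.orderOf_mk]
    have : s * gPerm p q ^ q * s⁻¹ = MulAut.conj s (gPerm p q ^ q) := rfl
    rw [this, MulEquiv.orderOf_eq, gPerm_order p q hq hp11]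
  · apply top_of_moves hq hp11 g _ hg
    intro h
    rw [Equiv.Perm.perm_mapsTo_inl_iff_mapsTo_inr] at h
    obtain ⟨y, hy⟩ := h ⟨0, rfl⟩
    have hne : ((q : ℕ) : ZMod p) ≠ 0 := by
      rw [Ne, ZMod.natCast_eq_zero_iff]
      intro h2
      have := Nat.le_of_dvd (by omega) h2
      omega
    have h1 : s⁻¹ (Sum.inr 0) = Sum.inl 0 := by simp [hs]
    have h2 : s (Sum.inl (q : ZMod p)) = Sum.inl (q : ZMod p) := by
      rw [hs, Equiv.swap_apply_of_ne_of_ne] <;> simp [hne]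
    simp only [Equiv.Perm.mul_apply, h1, gPerm_pow_inl, zero_add, h2] at hy
    cases hy

lemma card_F {p q : ℕ} [hp : Fact p.Prime] [NeZero q] (hq : q + 2 = p) (hp11 : 11 ≤ p)
    (g : alternatingGroup (ZMod p ⊕ ZMod q)) (hg : g.1 = gPerm p q) :
    Nat.card {φ : MulAut (alternatingGroup (ZMod p ⊕ ZMod q)) // φ g = g} ≤
      (p - 1).factorial * (p + q).choose p := by
  obtain ⟨c, hc, htop⟩ := exists_c hq hp11 g hg
  have hcard : Fintype.card (ZMod p ⊕ ZMod q) = p + q := by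
    rw [Fintype.card_sum, ZMod.card, ZMod.card]
  have h := Equiv.Perm.card_of_cycleType_singleton (α := ZMod p ⊕ ZMod q) (n := p) (by omega)
    (by omega)
  rw [hcard] at h
  rw [← h, ← Fintype.card_coe, ← Nat.card_eq_fintype_card]
  apply Nat.card_le_card_of_injective (fun φ => (⟨(φ.1 c).1, by
    have ho : orderOf (φ.1 c).1 = p := by
      rw [Subgroup.orderOf_coe, MulEquiv.orderOf_eq, hc]
    have hcy := cyc_of_order hq hp11 _ ho
    simp only [Finset.mem_filter, Finset.mem_univ, true_and]
    rw [hcy.cycleType, ← hcy.orderOf, ho]⟩ :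
    {x // x ∈ ({g | g.cycleType = {p}} : Finset (Equiv.Perm (ZMod p ⊕ ZMod q)))}))
  intro φ ψ hφψ
  have hcc : φ.1 c = ψ.1 c := Subtype.ext (congrArg (fun z => z.1) hφψ)
  apply Subtype.ext
  have : (φ.1.toMonoidHom) = ψ.1.toMonoidHom := by
    apply MonoidHom.eq_of_eqOn_dense htop
    rintro x (rfl | rfl)
    · exact φ.2.trans ψ.2.symm
    · exact hcc
  ext x : 1
  exact DFunLike.congr_fun this x

lemma nonab {p q : ℕ} [hp : Fact p.Prime] [NeZero q] (hq : q + 2 = p) (hp11 : 11 ≤ p) :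
    ∃ a b : alternatingGroup (ZMod p ⊕ ZMod q), a * b ≠ b * a := by
  by_contra! h
  have h2 : center (alternatingGroup (ZMod p ⊕ ZMod q)) = ⊥ :=
    alternatingGroup.center_eq_bot (by
      rw [Nat.card_eq_fintype_card, Fintype.card_sum, ZMod.card, ZMod.card]; omega)
  have h3 : (⟨_, gPerm_mem p q hq hp11⟩ : alternatingGroup (ZMod p ⊕ ZMod q)) ∈
      center (alternatingGroup (ZMod p ⊕ ZMod q)) := mem_center_iff.2 fun x => h _ _
  rw [h2, mem_bot] at h3
  have h4 : gPerm p q = 1 := congrArg Subtype.val h3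
  have := gPerm_order p q hq hp11
  rw [h4, one_pow, orderOf_one] at this
  omega

lemma exists_S {p q : ℕ} [hp : Fact p.Prime] [NeZero q] (hq : q + 2 = p) (hp11 : 11 ≤ p) :
    ∃ S : Subgroup (alternatingGroup (ZMod p ⊕ ZMod q)), S ≠ ⊤ ∧
      Nat.card (alternatingGroup (ZMod p ⊕ ZMod q)) ≤ (p + q) * Nat.card S := by
  refine ⟨MulAction.stabilizer _ (Sum.inl 0 : ZMod p ⊕ ZMod q), ?_, ?_⟩
  · intro h
    have h1 : (⟨_, gPerm_mem p q hq hp11⟩ : alternatingGroup (ZMod p ⊕ ZMod q)) ∈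
      MulAction.stabilizer (alternatingGroup (ZMod p ⊕ ZMod q)) (Sum.inl 0 : ZMod p ⊕ ZMod q) := by
      rw [h]; trivial
    have h2 : gPerm p q (Sum.inl 0) = Sum.inl 0 := h1
    simp [gPerm] at h2
  · rw [← Subgroup.index_mul_card (MulAction.stabilizer _ (Sum.inl 0 : ZMod p ⊕ ZMod q))]
    apply Nat.mul_le_mul_right
    rw [MulAction.index_stabilizer]
    refine (Set.ncard_le_card _).trans_eq ?_
    rw [Nat.card_sum, Nat.card_zmod, Nat.card_zmod]


lemma exists_large (k : ℕ) : ∃ M : ℕ, ∀ q ≥ M, 8 * (2 * q + 2) ^ k ≤ 2 ^ q := by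
  have h := tendsto_pow_const_div_const_pow_of_one_lt k (r := (2:ℝ)) (by norm_num)
  have h2 := h.eventually (ge_mem_nhds (show (0:ℝ) < 1 / (8 * 4 ^ k) by positivity))
  obtain ⟨M, hM⟩ := Filter.eventually_atTop.1 h2
  refine ⟨M + 1, fun q hq => ?_⟩
  have h3 := hM q (by omega)
  rw [div_le_div_iff₀ (by positivity) (by positivity)] at h3
  have h4 : 8 * 4 ^ k * q ^ k ≤ 2 ^ q := by
    have : (8 * 4 ^ k * q ^ k : ℝ) ≤ 2 ^ q := by linarith
    exact_mod_cast this
  calc 8 * (2 * q + 2) ^ k ≤ 8 * (4 * q) ^ k := by gcongr; omega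
    _ = 8 * 4 ^ k * q ^ k := by rw [mul_pow, mul_assoc]
    _ ≤ _ := h4

lemma two_pow_le_central (q : ℕ) (hq : 0 < q) : 2 ^ q ≤ q.centralBinom := by
  have h := Nat.four_pow_le_two_mul_self_mul_centralBinom q hq
  have h1 : 2 * q ≤ 2 ^ q := by
    obtain ⟨r, rfl⟩ : ∃ r, q = r + 1 := ⟨q - 1, by omega⟩
    have : r < 2 ^ r := Nat.lt_two_pow_self
    rw [pow_succ]; omega
  have h2 : (4:ℕ) ^ q = 2 ^ q * 2 ^ q := by rw [← mul_pow]; norm_num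
  have h3 : 2 ^ q * 2 ^ q ≤ 2 ^ q * q.centralBinom := by
    rw [← h2]; exact h.trans (Nat.mul_le_mul_right _ h1)
  exact Nat.le_of_mul_le_mul_left h3 (by positivity)

lemma two_pow_le_factorial (q : ℕ) (hq : 4 ≤ q) : 2 ^ q ≤ q.factorial := by
  induction q, hq using Nat.le_induction with
  | base => decide
  | succ k hk ih =>
    rw [pow_succ, Nat.factorial_succ, mul_comm]
    exact Nat.mul_le_mul (by omega) ih

lemma final_numeric (p q N B F t : ℕ) (hq : q + 2 = p) (hq4 : 4 ≤ q) (hN1 : 1 ≤ N)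
    (hN : 8 * N ^ 2 ≤ 2 ^ q) (hB : B ≤ p.factorial * q.factorial)
    (hF : F ≤ (p - 1).factorial * (p + q).choose p) (ht : 2 * t = (p + q).factorial) :
    2 * (N * B + N ^ 2 * F) ≤ t := by
  have hfac : (p + q).factorial = (p + q).choose p * p.factorial * q.factorial := by
    have := Nat.choose_mul_factorial_mul_factorial (n := p + q) (k := p) (by omega)
    rw [Nat.add_sub_cancel_left] at this
    exact this.symm
  have hp : p.factorial = p * (p - 1).factorial := (Nat.mul_factorial_pred (by omega)).symm
  have hC : 2 ^ q ≤ (p + q).choose p := by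
    rw [Nat.choose_symm_add]
    refine (two_pow_le_central q (by omega)).trans ?_
    rw [Nat.centralBinom]
    exact Nat.choose_le_choose q (by omega)
  have hq' := two_pow_le_factorial q hq4
  have h1 : 8 * N ≤ (p + q).choose p := by nlinarith
  have h2 : 8 * N ^ 2 ≤ p * q.factorial := by nlinarith
  have e1 : 8 * (N * B) ≤ 2 * t := by
    rw [ht, hfac]
    calc 8 * (N * B) = (8 * N) * B := by ring
      _ ≤ (p + q).choose p * (p.factorial * q.factorial) := Nat.mul_le_mul h1 hB
      _ = _ := by ring
  have e2 : 8 * (N ^ 2 * F) ≤ 2 * t := by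
    rw [ht, hfac, hp]
    calc 8 * (N ^ 2 * F) = (8 * N ^ 2) * F := by ring
      _ ≤ (p * q.factorial) * ((p - 1).factorial * (p + q).choose p) := Nat.mul_le_mul h2 hF
      _ = _ := by ring
  omega

theorem stmt5 (n : ℕ) (hn : 0 < n) :
    ∃ (G : Type) (_ : Group G) (_ : Finite G),
      (∃ a b : G, Subgroup.closure {a, b} = ⊤) ∧
      (n : ℝ) ≤ eTime G ∅ ∧ ∃ g : G, eTime G {g} ≤ 5 := by
  classical
  obtain ⟨M, hM⟩ := exists_large (4 * n)
  obtain ⟨p, hpM, hp⟩ := Nat.exists_infinite_primes (M + 11)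
  obtain ⟨q, hq⟩ : ∃ q, q + 2 = p := ⟨p - 2, by omega⟩
  have : Fact p.Prime := ⟨hp⟩
  have : NeZero q := ⟨by omega⟩
  have hp11 : 11 ≤ p := by omega
  have hcardΩ : Nat.card (ZMod p ⊕ ZMod q) = p + q := by
    rw [Nat.card_sum, Nat.card_zmod, Nat.card_zmod]
  have : IsSimpleGroup (alternatingGroup (ZMod p ⊕ ZMod q)) :=
    alternatingGroup.isSimpleGroup (by omega)
  obtain ⟨g, hg⟩ : ∃ g : alternatingGroup (ZMod p ⊕ ZMod q), g.1 = gPerm p q :=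
    ⟨⟨_, gPerm_mem p q hq hp11⟩, rfl⟩
  obtain ⟨S, hS, hSm⟩ := exists_S hq hp11
  have hB := card_B hq hp11 g hg
  have hF := card_F hq hp11 g hg
  have : Nontrivial (ZMod p ⊕ ZMod q) := ⟨Sum.inl 0, Sum.inr 0, by simp⟩
  have hT : 2 * Nat.card (alternatingGroup (ZMod p ⊕ ZMod q)) = (p + q).factorial := by
    rw [two_mul_nat_card_alternatingGroup, Nat.card_perm, hcardΩ]
  have hna := nonab (p := p) (q := q) hq hp11
  obtain ⟨N, hN⟩ : ∃ N, N + 1 = (p + q) ^ (2 * n) :=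
    ⟨(p + q) ^ (2 * n) - 1, Nat.sub_add_cancel (Nat.one_le_pow _ _ (by omega))⟩
  have hN2 : 8 * (N + 1) ^ 2 ≤ 2 ^ q := by
    have h1 := hM q (by omega)
    rw [hN, ← pow_mul, show 2 * n * 2 = 4 * n by ring, show p + q = 2 * q + 2 by omega]
    exact h1
  have hnum := final_numeric p q (N + 1) _ _ _ hq (by omega) (by omega) hN2 hB hF hT
  have hbad := bad_card hna g N
  simp only [← Nat.card_eq_fintype_card] at hbad
  have hGcard : Nat.card (Fin (N + 1) → (alternatingGroup (ZMod p ⊕ ZMod q))) = Nat.card (alternatingGroup (ZMod p ⊕ ZMod q)) * Nat.card (alternatingGroup (ZMod p ⊕ ZMod q)) ^ N := by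
    rw [Nat.card_fun, Nat.card_fin, pow_succ']
  have hbad2 : 2 * Nat.card {x : Fin (N + 1) → (alternatingGroup (ZMod p ⊕ ZMod q)) //
      closure {(fun _ => g : Fin (N + 1) → (alternatingGroup (ZMod p ⊕ ZMod q))), x} ≠ ⊤} ≤ Nat.card (Fin (N + 1) → (alternatingGroup (ZMod p ⊕ ZMod q))) := by
    rw [hGcard]
    refine (Nat.mul_le_mul_left 2 hbad).trans ?_
    rw [← mul_assoc]
    exact Nat.mul_le_mul_right _ hnum
  refine ⟨Fin (N + 1) → (alternatingGroup (ZMod p ⊕ ZMod q)), inferInstance, inferInstance, ?_, ?_, (fun _ => g), ?_⟩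
  · by_contra! hcon
    have : Nat.card {x : Fin (N + 1) → (alternatingGroup (ZMod p ⊕ ZMod q)) //
        closure {(fun _ => g : Fin (N + 1) → (alternatingGroup (ZMod p ⊕ ZMod q))), x} ≠ ⊤} = Nat.card (Fin (N + 1) → (alternatingGroup (ZMod p ⊕ ZMod q))) :=
      Nat.card_congr (Equiv.subtypeUnivEquiv fun x => hcon _ x)
    have hpos : 0 < Nat.card (Fin (N + 1) → (alternatingGroup (ZMod p ⊕ ZMod q))) := Nat.card_pos
    omega
  · apply eTime_ge
    intro k hk
    apply genProb_pi_le S hS (p + q) (N + 1) hSm k _ (by omega)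
    rw [hN]
    exact Nat.pow_le_pow_right (by omega) hk.le
  · exact (eTime_le_two _ hbad2).trans (by norm_num)
end

section
/- Let S be a finite nonabelian simple group and t a positive integer. Then S^t (the direct power of t copies of S) is 2-generated if and only if t ≤ P_S(2)·|S|^2/|Aut(S)|, where P_S(2) is the probability that two uniformly random elements of S generate S. -/
open Subgroup

/-- `P_S(2)`: the probability that two uniformly random elements of `S` generate `S`. -/
noncomputable def genProb2 (S : Type*) [Group S] : ℝ :=
  (Nat.card {v : S × S // Subgroup.closure {v.1, v.2} = ⊤} : ℝ) / (Nat.card S : ℝ) ^ 2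

/-- The generating pairs of `S`. -/
abbrev GenPair (S : Type*) [Group S] := {v : S × S // Subgroup.closure {v.1, v.2} = ⊤}

theorem closure_pair_map {G K : Type*} [Group G] [Group K] (f : G →* K)
    (hf : Function.Surjective f) {a b : G} (h : Subgroup.closure {a, b} = ⊤) :
    Subgroup.closure {f a, f b} = ⊤ := by
  have h1 := congrArg (Subgroup.map f) h
  rw [MonoidHom.map_closure, Set.image_pair, Subgroup.map_top_of_surjective f hf] at h1
  exact h1

instance genPairAction (S : Type*) [Group S] : MulAction (MulAut S) (GenPair S) where
  smul φ v := ⟨(φ v.1.1, φ v.1.2), closure_pair_map φ.toMonoidHom φ.surjective v.2⟩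
  one_smul _ := rfl
  mul_smul _ _ _ := rfl

theorem genPair_smul_val {S : Type*} [Group S] (φ : MulAut S) (v : GenPair S) :
    (φ • v).1 = (φ v.1.1, φ v.1.2) := rfl

theorem genPair_stabilizer {S : Type*} [Group S] (v : GenPair S) :
    MulAction.stabilizer (MulAut S) v = ⊥ := by
  rw [eq_bot_iff]
  intro φ hφ
  have h := congrArg Subtype.val (MulAction.mem_stabilizer_iff.1 hφ)
  rw [genPair_smul_val, Prod.ext_iff] at h
  rw [Subgroup.mem_bot]
  have : φ.toMonoidHom = MonoidHom.id S := by
    refine MonoidHom.eq_of_eqOn_dense v.2 ?_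
    rintro x (rfl | rfl)
    · exact h.1
    · exact h.2
  ext x
  exact DFunLike.congr_fun this x

/-- The elements of the `j`-th projection of `H` coming from elements trivial on `F`. -/
def projKer {ι S : Type*} [Group S] (H : Subgroup (ι → S)) (F : Finset ι) (j : ι) :
    Subgroup S :=
  (H ⊓ Subgroup.pi (F : Set ι) (fun _ => ⊥)).map (Pi.evalMonoidHom (fun _ => S) j)

theorem mem_projKer {ι S : Type*} [Group S] {H : Subgroup (ι → S)} {F : Finset ι} {j : ι} {s : S} :
    s ∈ projKer H F j ↔ ∃ x ∈ H, (∀ i ∈ F, x i = 1) ∧ x j = s := by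
  simp [projKer, Subgroup.mem_pi, and_assoc]

theorem projKer_normal {ι S : Type*} [Group S] {H : Subgroup (ι → S)}
    (hs : ∀ i s, ∃ x ∈ H, x i = s) (F : Finset ι) (j : ι) : (projKer H F j).Normal := by
  constructor
  intro n hn g
  obtain ⟨x, hx, hF, rfl⟩ := mem_projKer.1 hn
  obtain ⟨y, hy, rfl⟩ := hs j g
  refine mem_projKer.2 ⟨y * x * y⁻¹, H.mul_mem (H.mul_mem hy hx) (H.inv_mem hy), ?_, rfl⟩
  intro i hi
  simp [hF i hi]

theorem projKer_single {ι S : Type*} [Group S] [Finite S] [IsSimpleGroup S]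
    {H : Subgroup (ι → S)} (hs : ∀ i s, ∃ x ∈ H, x i = s) {i j : ι}
    (hd : ¬ ∃ φ : MulAut S, ∀ x ∈ H, φ (x i) = x j) : projKer H {i} j = ⊤ := by
  refine ((projKer_normal hs {i} j).eq_bot_or_eq_top).resolve_left fun hbot => hd ?_
  let f : H →* S := (Pi.evalMonoidHom (fun _ => S) j).comp H.subtype
  let g : H →* S := (Pi.evalMonoidHom (fun _ => S) i).comp H.subtype
  have hg : Function.Surjective g := fun s => by
    obtain ⟨x, hx, rfl⟩ := hs i s
    exact ⟨⟨x, hx⟩, rfl⟩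
  have hk : g.ker ≤ f.ker := by
    intro x hx
    have : x.1 j ∈ projKer H {i} j := mem_projKer.2 ⟨x.1, x.2, by
      intro k hk
      rw [Finset.mem_singleton.1 hk]
      exact hx, rfl⟩
    rw [hbot] at this
    exact this
  let φ : S →* S := g.liftOfSurjective hg ⟨f, hk⟩
  have hφ : ∀ x : H, φ (g x) = f x := fun x =>
    MonoidHom.liftOfRightInverse_comp_apply g _ _ ⟨f, hk⟩ x
  have hsurj : Function.Surjective φ := fun s => by
    obtain ⟨x, hx, rfl⟩ := hs j s
    exact ⟨g ⟨x, hx⟩, hφ _⟩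
  refine ⟨MulEquiv.ofBijective φ ⟨Finite.injective_iff_surjective.2 hsurj, hsurj⟩, ?_⟩
  intro x hx
  exact hφ ⟨x, hx⟩

theorem projKer_eq_top {ι S : Type*} [DecidableEq ι] [Group S] [Finite S] [IsSimpleGroup S]
    (hna : ¬ ∀ a b : S, a * b = b * a)
    {H : Subgroup (ι → S)} (hs : ∀ i s, ∃ x ∈ H, x i = s)
    (hd : ∀ i j, i ≠ j → ¬ ∃ φ : MulAut S, ∀ x ∈ H, φ (x i) = x j) (j : ι) (F : Finset ι) :
    j ∉ F → projKer H F j = ⊤ := by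
  induction F using Finset.induction_on with
  | empty =>
    intro _
    rw [eq_top_iff]
    intro s _
    obtain ⟨x, hx, rfl⟩ := hs j s
    exact mem_projKer.2 ⟨x, hx, by simp, rfl⟩
  | insert i F hi ih =>
    intro hj
    rw [Finset.mem_insert, not_or] at hj
    have h1 := ih hj.2
    have h2 := projKer_single hs (hd i j (Ne.symm hj.1))
    refine ((projKer_normal hs (insert i F) j).eq_bot_or_eq_top).resolve_left fun hbot => hna ?_
    intro a b
    obtain ⟨x, hx, hxF, rfl⟩ := mem_projKer.1 (h1 ▸ Subgroup.mem_top a)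
    obtain ⟨y, hy, hyF, rfl⟩ := mem_projKer.1 (h2 ▸ Subgroup.mem_top b)
    have : x j * y j * (x j)⁻¹ * (y j)⁻¹ ∈ projKer H (insert i F) j := by
      refine mem_projKer.2 ⟨x * y * x⁻¹ * y⁻¹, H.mul_mem (H.mul_mem (H.mul_mem hx hy)
        (H.inv_mem hx)) (H.inv_mem hy), ?_, rfl⟩
      intro k hk
      rcases Finset.mem_insert.1 hk with rfl | hk
      · simp [hyF k (Finset.mem_singleton_self k)]
      · simp [hxF k hk]
    rw [hbot, Subgroup.mem_bot] at this
    rw [mul_inv_eq_one, mul_inv_eq_iff_eq_mul] at this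
    exact this

theorem subgroup_pi_eq_top {ι S : Type*} [Fintype ι] [DecidableEq ι] [Group S] [Finite S]
    [IsSimpleGroup S] (hna : ¬ ∀ a b : S, a * b = b * a)
    {H : Subgroup (ι → S)} (hs : ∀ i s, ∃ x ∈ H, x i = s)
    (hd : ∀ i j, i ≠ j → ¬ ∃ φ : MulAut S, ∀ x ∈ H, φ (x i) = x j) : H = ⊤ := by
  rw [eq_top_iff]
  intro x _
  refine Subgroup.pi_mem_of_mulSingle_mem x fun j => ?_
  have h := projKer_eq_top hna hs hd j (Finset.univ.erase j) (by simp)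
  obtain ⟨y, hy, hyF, hyj⟩ := mem_projKer.1 (h ▸ Subgroup.mem_top (x j))
  have : Pi.mulSingle j (x j) = y := by
    ext k
    by_cases hk : k = j
    · subst hk
      simp [hyj]
    · rw [Pi.mulSingle_eq_of_ne hk, hyF k (by simp [hk])]
  rw [this]
  exact hy

theorem pair_generates_iff {S : Type*} [Group S] [Finite S] [IsSimpleGroup S]
    (hna : ¬ ∀ a b : S, a * b = b * a) (t : ℕ) :
    (∃ a b : Fin t → S, Subgroup.closure {a, b} = ⊤) ↔
      Nonempty (Fin t ↪ Quotient (MulAction.orbitRel (MulAut S) (GenPair S))) := by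
  constructor
  · rintro ⟨a, b, hab⟩
    let v : Fin t → GenPair S := fun i => ⟨(a i, b i),
      closure_pair_map (Pi.evalMonoidHom (fun _ => S) i) (Function.surjective_eval i) hab⟩
    refine ⟨⟨fun i => Quotient.mk _ (v i), ?_⟩⟩
    intro j i hij
    by_contra hne
    obtain ⟨φ, hφ⟩ := MulAction.orbitRel_apply.1 (Quotient.exact hij)
    have h := congrArg Subtype.val hφ
    change (φ (a i), φ (b i)) = (a j, b j) at h
    rw [Prod.ext_iff] at h
    have key : φ.toMonoidHom.comp (Pi.evalMonoidHom (fun _ => S) i) =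
        Pi.evalMonoidHom (fun _ => S) j := by
      refine MonoidHom.eq_of_eqOn_dense hab ?_
      rintro x (rfl | rfl)
      · exact h.1
      · exact h.2
    obtain ⟨s, hs⟩ := exists_ne (1 : S)
    have h2 := DFunLike.congr_fun key (Pi.mulSingle i s)
    have h3 : φ (Pi.mulSingle (M := fun _ => S) i s i) =
      Pi.mulSingle (M := fun _ => S) i s j := h2
    rw [Pi.mulSingle_eq_same, Pi.mulSingle_eq_of_ne hne] at h3
    exact hs (by simpa using h3)
  · rintro ⟨e⟩
    let v : Fin t → GenPair S := fun i => (e i).out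
    refine ⟨fun i => (v i).1.1, fun i => (v i).1.2, subgroup_pi_eq_top hna ?_ ?_⟩
    · intro i s
      have : s ∈ (Subgroup.closure {(fun i => (v i).1.1), (fun i => (v i).1.2)}).map
          (Pi.evalMonoidHom (fun _ => S) i) := by
        rw [MonoidHom.map_closure, Set.image_pair]
        have := (v i).2
        change Subgroup.closure {(v i).1.1, (v i).1.2} = ⊤ at this
        change s ∈ Subgroup.closure {(v i).1.1, (v i).1.2}
        rw [this]
        trivial
      exact this
    · rintro i j hij ⟨φ, hφ⟩
      apply hij
      apply e.injective
      rw [← Quotient.out_eq (e i), ← Quotient.out_eq (e j)]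
      refine (Quotient.sound (s := MulAction.orbitRel (MulAut S) (GenPair S))
        (MulAction.orbitRel_apply.2 ⟨φ, ?_⟩)).symm
      exact Subtype.ext (Prod.ext (hφ (fun i => (v i).1.1) (Subgroup.subset_closure (by simp)))
        (hφ (fun i => (v i).1.2) (Subgroup.subset_closure (by simp))))

/-- `S^t` is 2-generated if and only if `t ≤ P_S(2)·|S|²/|Aut S|`. -/
theorem stmt6 (S : Type*) [Group S] [Finite S] [IsSimpleGroup S]
    (hna : ¬ ∀ a b : S, a * b = b * a) (t : ℕ) (ht : 0 < t) :
    (∃ a b : Fin t → S, Subgroup.closure {a, b} = ⊤) ↔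
      (t : ℝ) ≤ genProb2 S * (Nat.card S : ℝ) ^ 2 / (Nat.card (MulAut S) : ℝ) := by
  rw [pair_generates_iff hna t]
  have : Finite (MulAut S) := Finite.of_injective (fun φ : MulAut S => (φ : S → S))
    DFunLike.coe_injective
  have hcard := Nat.card_congr (MulAction.selfEquivOrbitsQuotientProd
    (G := MulAut S) (X := GenPair S) genPair_stabilizer)
  rw [Nat.card_prod] at hcard
  have hS : (Nat.card S : ℝ) ^ 2 ≠ 0 := by
    have : Nat.card S ≠ 0 := Nat.card_pos.ne'
    positivity
  have hA : (Nat.card (MulAut S) : ℝ) ≠ 0 := by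
    have : Nat.card (MulAut S) ≠ 0 := Nat.card_pos.ne'
    positivity
  unfold genProb2
  rw [div_mul_cancel₀ _ hS, hcard, Nat.cast_mul, mul_div_cancel_right₀ _ hA, Nat.cast_le]
  have : Fintype (Quotient (MulAction.orbitRel (MulAut S) (GenPair S))) := Fintype.ofFinite _
  rw [Function.Embedding.nonempty_iff_card_le, Fintype.card_fin, Nat.card_eq_fintype_card]
end

section
/- Let S = Alt(7). Then P_S(2) = 229/315, where P_S(2) is the probability that two uniformly random elements of Alt(7) generate Alt(7). -/
open Subgroup

namespace A7

/-- The symmetric group on seven letters. -/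
abbrev S := Equiv.Perm (Fin 7)

/-! ### Permutations packed into natural numbers, in base eight -/

/-- Image of the point `v` under the packed permutation `W`. -/
def app (W v : ℕ) : ℕ := Nat.land (Nat.shiftRight W (Nat.mul 3 v)) 7

/-- Pack a list of octal digits. -/
noncomputable def pack (l : List ℕ) : ℕ :=
  List.rec 0 (fun a _ ih => Nat.add a (Nat.mul 8 ih)) l

theorem brec {α : Type} (c : Bool) (a b : α) :
    (Bool.rec a b c : α) = bif c then b else a := by
  cases c <;> rfl

/-- Evaluate a function at a number, forcing the kernel to compute that number first. -/
noncomputable def force {α : Type} (n : ℕ) (f : ℕ → α) : α :=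
  Nat.rec (f 0) (fun k _ => f (Nat.succ k)) n

theorem force_eq {α : Type} (n : ℕ) (f : ℕ → α) : force n f = f n := by
  cases n <;> rfl

theorem app_eq (W v : ℕ) : app W v = W / 8 ^ v % 8 := by
  have h1 : app W v = (W >>> (3 * v)) &&& 7 := rfl
  rw [h1, Nat.shiftRight_eq_div_pow, pow_mul]
  exact Nat.and_two_pow_sub_one_eq_mod _ 3

theorem app_pack : ∀ (l : List ℕ), (∀ a ∈ l, a < 8) → ∀ (i : ℕ) (h : i < l.length),
    app (pack l) i = l[i]
  | [], _, i, h => by simp at h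
  | a :: l, hl, i, h => by
    have ha : a < 8 := hl a (by simp)
    have hp : pack (a :: l) = a + 8 * pack l := rfl
    cases i with
    | zero => rw [app_eq, hp]; simp; omega
    | succ i =>
      have ih := app_pack l (fun b hb => hl b (by simp [hb])) i (by simpa using h)
      rw [app_eq] at ih
      have h8 : (a + 8 * pack l) / 8 = pack l := by omega
      rw [app_eq, hp, pow_succ', ← Nat.div_div_eq_div_mul, h8, ih]
      simp

/-- List of the values of a permutation. -/
def lst {n : ℕ} (σ : Equiv.Perm (Fin n)) : List ℕ := List.ofFn fun i => (σ i).val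

/-- The packed form of a permutation. -/
noncomputable def code (σ : S) : ℕ := pack (lst σ)

theorem app_code (σ : S) (i : Fin 7) : app (code σ) i = σ i := by
  unfold code
  rw [app_pack (lst σ) _ i (by simp [lst])]
  · simp only [lst, List.getElem_ofFn]
  · intro a ha
    simp only [lst, List.mem_ofFn] at ha
    obtain ⟨j, rfl⟩ := ha
    omega

/-! ### Summing over all permutations of a given sign -/

/-- Sum of `g` over the numbers below `k`. -/
noncomputable def sumR (k : ℕ) (g : ℕ → ℕ) : ℕ :=
  Nat.rec 0 (fun k ih => Nat.add ih (g k)) k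

theorem sumR_eq (k : ℕ) (g : ℕ → ℕ) : sumR k g = ∑ i : Fin k, g i := by
  induction k with
  | zero => rfl
  | succ k ih =>
    rw [Fin.sum_univ_castSucc]
    simp only [Fin.val_castSucc, Fin.val_last]
    rw [← ih]; rfl

/-- The value of `swap 0 p` at `v + 1`. -/
noncomputable def ins (p v : ℕ) : ℕ := Bool.rec (Nat.succ v) 0 (Nat.beq (Nat.succ v) p)

/-- Apply `ins p` to all the elements of a list. -/
noncomputable def insL (p : ℕ) (l : List ℕ) : List ℕ :=
  List.rec [] (fun a _ ih => ins p a :: ih) l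

theorem insL_eq (p : ℕ) (l : List ℕ) : insL p l = l.map (ins p) := by
  induction l with
  | nil => rfl
  | cons a l ih => rw [List.map_cons, ← ih]; rfl

/-- Sum of `f` over the permutations of `n` letters that are even (`b = true`) or odd. -/
noncomputable def sumE (n : ℕ) : Bool → (List ℕ → ℕ) → ℕ :=
  Nat.rec (fun b f => Bool.rec 0 (f []) b) (fun n ih b f => sumR (Nat.succ n) fun p =>
    ih (Bool.rec (Bool.rec true false b) b (Nat.beq p 0)) fun e => f (p :: insL p e)) n

theorem sumE_succ (n : ℕ) (b : Bool) (f : List ℕ → ℕ) :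
    sumE (n + 1) b f = sumR (n + 1) fun p =>
      sumE n (bif Nat.beq p 0 then b else !b) fun e => f (p :: e.map (ins p)) := by
  simp only [← insL_eq]
  show (sumR (n + 1) fun p =>
    sumE n (Bool.rec (Bool.rec true false b) b (Nat.beq p 0)) fun e => f (p :: insL p e)) = _
  congr 1
  funext p
  rw [brec]
  cases b <;> rfl

/-- The sign encoded by a Boolean. -/
def sg (b : Bool) : ℤˣ := bif b then 1 else -1

theorem lst_decompose {n : ℕ} (p : Fin (n + 1)) (e : Equiv.Perm (Fin n)) :
    lst (Equiv.Perm.decomposeFin.symm (p, e)) = p.val :: (lst e).map (ins p) := by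
  unfold lst
  rw [List.ofFn_succ, Equiv.Perm.decomposeFin_symm_apply_zero, List.map_ofFn]
  congr 2
  funext i
  rw [Equiv.Perm.decomposeFin_symm_apply_succ]
  simp only [Function.comp, ins]
  by_cases h : (e i).succ = p
  · subst h
    simp
  · rw [Equiv.swap_apply_of_ne_of_ne (Fin.succ_ne_zero _) h]
    have : Nat.beq (Nat.succ (e i).val) p = false := by
      rw [← Bool.not_eq_true, Nat.beq_eq]
      intro h'
      exact h (Fin.ext h')
    simp [this]

theorem sumE_eq (n : ℕ) : ∀ (b : Bool) (f : List ℕ → ℕ),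
    sumE n b f = ∑ σ : Equiv.Perm (Fin n), if Equiv.Perm.sign σ = sg b then f (lst σ) else 0 := by
  induction n with
  | zero =>
    intro b f
    cases b <;> simp [sumE, sg, lst]
  | succ n ih =>
    intro b f
    rw [← Equiv.sum_comp Equiv.Perm.decomposeFin.symm, Fintype.sum_prod_type]
    rw [sumE_succ, sumR_eq]
    refine Finset.sum_congr rfl fun p _ => ?_
    rw [ih]
    refine Finset.sum_congr rfl fun e _ => ?_
    rw [lst_decompose, Equiv.Perm.decomposeFin.symm_sign]
    by_cases hp : p = 0
    · subst hp; simp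
    · have : Nat.beq p.val 0 = false := by
        rw [← Bool.not_eq_true, Nat.beq_eq]
        intro h'
        exact hp (Fin.ext h')
      rw [this, if_neg hp]
      have : (Equiv.Perm.sign e = sg (!b)) ↔ (-1 * Equiv.Perm.sign e = sg b) := by
        cases b <;> rcases Int.units_eq_one_or (Equiv.Perm.sign e) with h | h <;>
          rw [h] <;> decide
      simp [this]

/-! ### Families of subsets preserved by a permutation -/

/-- Bit mask of a set given by the list of its elements. -/
noncomputable def mask (l : List ℕ) : ℕ :=
  List.rec 0 (fun a _ ih => Nat.lor (Nat.shiftLeft 1 a) ih) l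

/-- Bit mask of the image of a set. -/
noncomputable def imask (Y : ℕ) (l : List ℕ) : ℕ :=
  List.rec 0 (fun a _ ih => Nat.lor (Nat.shiftLeft 1 (app Y a)) ih) l

theorem imask_eq (Y : ℕ) (l : List ℕ) : imask Y l = mask (l.map (app Y)) := by
  induction l with
  | nil => rfl
  | cons a l ih =>
    show Nat.lor (Nat.shiftLeft 1 (app Y a)) (imask Y l) = _
    rw [ih]; rfl

theorem testBit_mask (l : List ℕ) (j : ℕ) : (mask l).testBit j = true ↔ j ∈ l := by
  induction l with
  | nil => simp [mask]
  | cons a l ih =>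
    have h : mask (a :: l) = (1 <<< a) ||| mask l := rfl
    rw [h, Nat.testBit_or, Bool.or_eq_true, ih, Nat.one_shiftLeft, Nat.testBit_two_pow]
    simp [eq_comm]

theorem mask_eq_iff (l m : List ℕ) : mask l = mask m ↔ ∀ j, j ∈ l ↔ j ∈ m := by
  constructor
  · intro h j
    rw [← testBit_mask, h, testBit_mask]
  · intro h
    apply Nat.eq_of_testBit_eq
    intro j
    rw [Bool.eq_iff_iff, testBit_mask, testBit_mask, h]

/-- Membership of a number in a list. -/
noncomputable def mem (a : ℕ) (l : List ℕ) : Bool :=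
  List.rec false (fun b _ ih => Bool.rec ih true (Nat.beq a b)) l

theorem mem_cons (a b : ℕ) (l : List ℕ) :
    mem a (b :: l) = bif Nat.beq a b then true else mem a l := brec _ _ _

theorem mem_iff (a : ℕ) (l : List ℕ) : mem a l = true ↔ a ∈ l := by
  induction l with
  | nil => simp [mem]
  | cons b l ih =>
    by_cases h : a = b
    · simp [mem_cons, h]
    · have : Nat.beq a b = false := by
        rw [← Bool.not_eq_true, Nat.beq_eq]; exact h
      simp [mem_cons, this, ih, h]

/-- Do all the listed sets have their image under `Y` in the family with masks `M`? -/
noncomputable def presAux (Y : ℕ) (M : List ℕ) (F : List (List ℕ)) : Bool :=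
  List.rec true (fun l _ ih => Bool.rec false ih (force (imask Y l) (fun m => mem m M))) F

theorem presAux_cons (Y : ℕ) (M : List ℕ) (l : List ℕ) (F : List (List ℕ)) :
    presAux Y M (l :: F) =
      bif force (imask Y l) (fun m => mem m M) then presAux Y M F else false := brec _ _ _

/-- A family of sets, with the list of the corresponding masks. -/
abbrev Fam := List (List ℕ) × List ℕ

/-- Is the family preserved by the packed permutation? -/
noncomputable def pres (Y : ℕ) (q : Fam) : Bool := presAux Y q.2 q.1

/-- The family is well formed. -/
def Ok (q : Fam) : Prop := q.2 = q.1.map mask ∧ ∀ l ∈ q.1, ∀ a ∈ l, a < 7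

noncomputable instance (q : Fam) : Decidable (Ok q) := by unfold Ok; infer_instance

theorem presAux_iff (Y : ℕ) (M : List ℕ) (F : List (List ℕ)) :
    presAux Y M F = true ↔ ∀ l ∈ F, mask (l.map (app Y)) ∈ M := by
  induction F with
  | nil => simp [presAux]
  | cons l F ih =>
    rw [List.forall_mem_cons, ← ih, ← mem_iff]
    simp only [presAux_cons, force_eq, imask_eq]
    cases mem (mask (l.map (app Y))) M <;> simp

/-- The set of points given by a list. -/
def fs (l : List ℕ) : Set (Fin 7) := {i | i.val ∈ l}

theorem pres_iff (σ : S) (q : Fam) (hq : Ok q) :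
    pres (code σ) q = true ↔ ∀ l ∈ q.1, ∃ m ∈ q.1, σ '' fs l = fs m := by
  unfold pres
  rw [presAux_iff]
  refine forall₂_congr fun l hl => ?_
  rw [hq.1, List.mem_map]
  refine exists_congr fun m => and_congr_right fun hm => ?_
  rw [mask_eq_iff]
  have hl7 := hq.2 l hl
  have hm7 := hq.2 m hm
  have key : ∀ j : Fin 7, (j.val ∈ l.map (app (code σ))) ↔ j ∈ σ '' fs l := by
    intro j
    rw [List.mem_map]
    constructor
    · rintro ⟨a, ha, h⟩
      have h2 := app_code σ ⟨a, hl7 a ha⟩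
      refine ⟨⟨a, hl7 a ha⟩, ha, Fin.ext ?_⟩
      rw [← h2]; exact h
    · rintro ⟨i, hi, rfl⟩
      exact ⟨i, hi, app_code σ i⟩
  constructor
  · intro h
    ext j
    rw [← key, ← h]; rfl
  · intro h j
    by_cases hj : j < 7
    · have := key ⟨j, hj⟩
      rw [h] at this
      exact this.symm
    · constructor
      · intro h'; exact absurd (hm7 j h') hj
      · intro h'
        exfalso
        rw [List.mem_map] at h'
        obtain ⟨a, ha, h2⟩ := h'
        have h3 := app_code σ ⟨a, hl7 a ha⟩
        simp only at h3
        omega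

theorem pres_mul (σ τ : S) (q : Fam) (hq : Ok q) (h1 : pres (code σ) q = true)
    (h2 : pres (code τ) q = true) : pres (code (σ * τ)) q = true := by
  rw [pres_iff _ _ hq] at *
  intro l hl
  obtain ⟨m, hm, h⟩ := h2 l hl
  obtain ⟨k, hk, h'⟩ := h1 m hm
  refine ⟨k, hk, ?_⟩
  rw [← h', ← h, Set.image_image]
  rfl

theorem pres_closure (ρ σ τ : S) (q : Fam) (hq : Ok q) (h1 : pres (code ρ) q = true)
    (h2 : pres (code σ) q = true) (hτ : τ ∈ Subgroup.closure {ρ, σ}) :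
    pres (code τ) q = true := by
  rw [← Subgroup.mem_toSubmonoid, Subgroup.closure_toSubmonoid_of_finite] at hτ
  induction hτ using Submonoid.closure_induction with
  | mem x hx =>
    rcases hx with rfl | hx
    · exact h1
    · rw [Set.mem_singleton_iff] at hx
      subst hx; exact h2
  | one =>
    rw [pres_iff _ _ hq]
    intro l hl
    exact ⟨l, hl, by simp⟩
  | mul x y _ _ hx hy => exact pres_mul x y q hq hx hy

/-! ### Words -/

/-- Value at `i` of a word in the packed permutations `R` (`true`) and `Y` (`false`). -/
noncomputable def ev (R Y : ℕ) (w : List Bool) (i : ℕ) : ℕ :=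
  List.rec i (fun b _ ih => app (Bool.rec Y R b) ih) w

theorem ev_cons (R Y : ℕ) (b : Bool) (w : List Bool) (i : ℕ) :
    ev R Y (b :: w) i = app (bif b then R else Y) (ev R Y w i) := by
  rw [← brec]; rfl

/-- The corresponding product of permutations. -/
def wd (ρ σ : S) : List Bool → S
  | [] => 1
  | b :: w => (bif b then ρ else σ) * wd ρ σ w

theorem ev_eq (ρ σ : S) (w : List Bool) (i : Fin 7) :
    ev (code ρ) (code σ) w i = wd ρ σ w i := by
  induction w with
  | nil => rfl
  | cons b w ih =>
    cases b <;> simp [ev_cons, wd, ih, app_code]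

theorem wd_mem (ρ σ : S) (w : List Bool) : wd ρ σ w ∈ Subgroup.closure {ρ, σ} := by
  induction w with
  | nil => exact one_mem _
  | cons b w ih =>
    refine mul_mem (Subgroup.subset_closure ?_) ih
    cases b <;> simp

/-- The packed form of a word. -/
noncomputable def evp (R Y : ℕ) (w : List Bool) : ℕ :=
  pack [ev R Y w 0, ev R Y w 1, ev R Y w 2, ev R Y w 3, ev R Y w 4, ev R Y w 5, ev R Y w 6]

theorem evp_eq (ρ σ : S) (w : List Bool) : evp (code ρ) (code σ) w = code (wd ρ σ w) := by
  unfold evp code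
  congr 1
  have h : (fun i : Fin 7 => (wd ρ σ w i).val) = fun i : Fin 7 => ev (code ρ) (code σ) w i.val :=
    funext fun i => (ev_eq ρ σ w i).symm
  show _ = List.ofFn _
  rw [h]
  rfl

/-- Is the point `i` fixed by the square of `W`? -/
noncomputable def fx (W i : ℕ) : ℕ := Bool.rec 0 1 (Nat.beq (app W (app W i)) i)

/-- Number of fixed points of the square of `W`. -/
noncomputable def cnt (W : ℕ) : ℕ :=
  Nat.add (fx W 0) (Nat.add (fx W 1) (Nat.add (fx W 2) (Nat.add (fx W 3)
    (Nat.add (fx W 4) (Nat.add (fx W 5) (fx W 6))))))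

theorem cnt_eq (g : S) : cnt (code g) = (Finset.univ.filter fun i => (g * g) i = i).card := by
  rw [Finset.card_filter, Fin.sum_univ_seven]
  have key : ∀ i : Fin 7, (if (g * g) i = i then 1 else 0) = fx (code g) i := by
    intro i
    unfold fx
    rw [brec, app_code, app_code]
    by_cases h : (g * g) i = i
    · rw [if_pos h]
      have h' : g (g i) = i := h
      rw [h']; simp
    · rw [if_neg h]
      have : Nat.beq (g (g i)).val i = false := by
        rw [← Bool.not_eq_true, Nat.beq_eq]
        exact fun h' => h (Fin.ext h')
      rw [this]; rfl
  simp only [key]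
  show fx (code g) 0 + (fx (code g) 1 + (fx (code g) 2 + (fx (code g) 3 + (fx (code g) 4
    + (fx (code g) 5 + fx (code g) 6))))) = fx (code g) 0 + fx (code g) 1 + fx (code g) 2 +
    fx (code g) 3 + fx (code g) 4 + fx (code g) 5 + fx (code g) 6
  ring

theorem three_cycle_of_cnt (g : S) (h : cnt (code g) = 4) : (g * g).IsThreeCycle := by
  rw [cnt_eq] at h
  rw [← card_support_eq_three_iff]
  have h2 := Finset.card_filter_add_card_filter_not (s := (Finset.univ : Finset (Fin 7)))
    (fun i => (g * g) i = i)
  rw [h, Finset.card_univ, Fintype.card_fin] at h2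
  have h3 : (g * g).support = Finset.univ.filter fun i => ¬ (g * g) i = i := by
    ext i
    rw [Equiv.Perm.mem_support, Finset.mem_filter]
    exact ⟨fun h => ⟨Finset.mem_univ _, h⟩, fun h => h.2⟩
  rw [h3]; omega

/-- Does one of the words have a square that is a three-cycle? -/
noncomputable def anyWord (R Y : ℕ) (ws : List (List Bool)) : Bool :=
  List.rec false (fun w _ ih =>
    Bool.rec ih true (force (evp R Y w) (fun W => Nat.beq (cnt W) 4))) ws

theorem anyWord_cons (R Y : ℕ) (w : List Bool) (ws : List (List Bool)) :
    anyWord R Y (w :: ws) =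
      bif force (evp R Y w) (fun W => Nat.beq (cnt W) 4) then true else anyWord R Y ws :=
  brec _ _ _

theorem anyWord_imp (ρ σ : S) (ws : List (List Bool))
    (h : anyWord (code ρ) (code σ) ws = true) :
    ∃ g ∈ Subgroup.closure {ρ, σ}, g.IsThreeCycle := by
  induction ws with
  | nil => simp [anyWord] at h
  | cons w ws ih =>
    simp only [anyWord_cons, force_eq, evp_eq] at h
    cases h1 : Nat.beq (cnt (code (wd ρ σ w))) 4
    · rw [h1] at h
      exact ih h
    · rw [Nat.beq_eq] at h1
      exact ⟨_, mul_mem (wd_mem ρ σ w) (wd_mem ρ σ w), three_cycle_of_cnt _ h1⟩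

/-- Is one of the families preserved? -/
noncomputable def anyPres (Y : ℕ) (qs : List Fam) : Bool :=
  List.rec false (fun q _ ih => Bool.rec ih true (pres Y q)) qs

theorem anyPres_cons (Y : ℕ) (q : Fam) (qs : List Fam) :
    anyPres Y (q :: qs) = bif pres Y q then true else anyPres Y qs := brec _ _ _

theorem anyPres_iff (Y : ℕ) (qs : List Fam) :
    anyPres Y qs = true ↔ ∃ q ∈ qs, pres Y q = true := by
  induction qs with
  | nil => simp [anyPres]
  | cons q qs ih => cases h : pres Y q <;> simp [anyPres_cons, h, ih]

/-! ### The test for generation -/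

/-- A permutation, with families of sets that it preserves, and words. -/
structure Datum where
  R : ℕ
  fams : List Fam
  words : List (List Bool)

/-- `0` for a pair that does not generate, `1` for one that does, a large number if undecided. -/
noncomputable def cls (d : Datum) (Y : ℕ) : ℕ :=
  Bool.rec (Bool.rec 10000000 1 (anyWord d.R Y d.words)) 0 (anyPres Y d.fams)

/-- A seven-cycle. -/
def c7 : S := ⟨![1, 2, 3, 4, 5, 6, 0], ![6, 0, 1, 2, 3, 4, 5], by decide, by decide⟩

/-- A three-cycle. -/
def c3 : S := ⟨![1, 2, 0, 3, 4, 5, 6], ![2, 0, 1, 3, 4, 5, 6], by decide, by decide⟩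

theorem c7_mem : c7 ∈ alternatingGroup (Fin 7) := by
  rw [Equiv.Perm.mem_alternatingGroup]; decide +kernel

theorem c3_mem : c3 ∈ alternatingGroup (Fin 7) := by
  rw [Equiv.Perm.mem_alternatingGroup]; decide +kernel

/-- The family consisting of one set. -/
noncomputable def single (l : List ℕ) : Fam := ([l], [mask l])

/-- What has to be checked about a datum. -/
def Valid (d : Datum) : Prop :=
  (∀ q ∈ d.fams, Ok q ∧ pres d.R q = true ∧
    (pres (code c7) q = false ∨ pres (code c3) q = false)) ∧
  ∀ l ∈ [1, 2, 3, 4, 5, 6].sublists, pres d.R (single (0 :: l)) = true →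
    l = [1, 2, 3, 4, 5, 6] ∨ single (0 :: l) ∈ d.fams

noncomputable instance (d : Datum) : Decidable (Valid d) := by unfold Valid; infer_instance

theorem cls_zero (d : Datum) (hd : Valid d) (ρ σ : S) (hρ : code ρ = d.R)
    (h : anyPres (code σ) d.fams = true) :
    Subgroup.closure {ρ, σ} ≠ alternatingGroup (Fin 7) := by
  intro he
  rw [anyPres_iff] at h
  obtain ⟨q, hq, hs⟩ := h
  obtain ⟨h1, h2, h3⟩ := hd.1 q hq
  rw [← hρ] at h2
  rcases h3 with h3 | h3
  · rw [pres_closure ρ σ c7 q h1 h2 hs (he ▸ c7_mem)] at h3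
    exact absurd h3 (by decide)
  · rw [pres_closure ρ σ c3 q h1 h2 hs (he ▸ c3_mem)] at h3
    exact absurd h3 (by decide)

theorem pretransitive (d : Datum) (hd : Valid d) (ρ σ : S) (hρ : code ρ = d.R)
    (h : anyPres (code σ) d.fams = false) :
    MulAction.IsPretransitive (Subgroup.closure {ρ, σ}) (Fin 7) := by
  classical
  set G := Subgroup.closure {ρ, σ} with hG
  set O : Set (Fin 7) := MulAction.orbit G (0 : Fin 7) with hO
  have hinv : ∀ g ∈ G, g '' O = O := by
    intro g hg
    have := MulAction.smul_orbit (⟨g, hg⟩ : G) (0 : Fin 7)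
    rw [← hO] at this
    exact this
  let l : List ℕ := [1, 2, 3, 4, 5, 6].filter fun a => ∃ i ∈ O, i.val = a
  have hl : l ∈ [1, 2, 3, 4, 5, 6].sublists := by
    rw [List.mem_sublists]; exact List.filter_sublist
  have h0 : (0 : Fin 7) ∈ O := MulAction.mem_orbit_self _
  have hfs : fs (0 :: l) = O := by
    ext i
    simp only [fs, Set.mem_ofPred_eq, l, List.mem_cons, List.mem_filter, decide_eq_true_eq]
    constructor
    · rintro (h | ⟨_, j, hj, h⟩)
      · have : i = 0 := Fin.ext h
        rw [this]; exact h0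
      · rw [← Fin.ext h]; exact hj
    · intro hi
      by_cases hi0 : i.val = 0
      · exact Or.inl hi0
      · refine Or.inr ⟨?_, i, hi, rfl⟩
        simp; omega
  have hok : Ok (single (0 :: l)) := by
    refine ⟨rfl, ?_⟩
    intro m hm a ha
    simp only [single, List.mem_singleton] at hm
    subst hm
    simp only [l, List.mem_cons, List.mem_filter, decide_eq_true_eq] at ha
    rcases ha with rfl | ⟨_, i, _, rfl⟩ <;> omega
  have hp : ∀ g ∈ G, pres (code g) (single (0 :: l)) = true := by
    intro g hg
    rw [pres_iff _ _ hok]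
    intro m hm
    refine ⟨m, hm, ?_⟩
    simp only [single, List.mem_singleton] at hm
    subst hm
    rw [hfs, hinv g hg]
  have hρG : ρ ∈ G := Subgroup.subset_closure (by simp)
  have hσG : σ ∈ G := Subgroup.subset_closure (by simp)
  rcases hd.2 l hl (hρ ▸ hp ρ hρG) with hfull | hmem
  · have huniv : O = Set.univ := by
      rw [← hfs, hfull]
      ext i
      simp only [fs, Set.mem_ofPred_eq, Set.mem_univ, iff_true]
      fin_cases i <;> simp
    rw [MulAction.isPretransitive_iff_orbit_eq_univ (0 : Fin 7)]
    exact huniv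
  · have : anyPres (code σ) d.fams = true := by
      rw [anyPres_iff]
      exact ⟨_, hmem, hp σ hσG⟩
    rw [this] at h
    exact absurd h (by decide)

theorem cls_one (d : Datum) (hd : Valid d) (ρ σ : S) (hρ : code ρ = d.R)
    (hρ1 : Equiv.Perm.sign ρ = 1) (hσ1 : Equiv.Perm.sign σ = 1)
    (h : anyPres (code σ) d.fams = false) (hw : anyWord d.R (code σ) d.words = true) :
    Subgroup.closure {ρ, σ} = alternatingGroup (Fin 7) := by
  apply le_antisymm
  · rw [Subgroup.closure_le]
    rintro x (rfl | hx)
    · exact Equiv.Perm.mem_alternatingGroup.2 hρ1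
    · rw [Set.mem_singleton_iff] at hx
      subst hx
      exact Equiv.Perm.mem_alternatingGroup.2 hσ1
  · rw [← hρ] at hw
    obtain ⟨g, hg, h3⟩ := anyWord_imp ρ σ _ hw
    have := pretransitive d hd ρ σ hρ h
    refine Equiv.Perm.alternatingGroup_le_of_isPreprimitive_of_isThreeCycle_mem ?_ h3 hg
    apply MulAction.IsPreprimitive.of_prime_card
    rw [Nat.card_eq_fintype_card, Fintype.card_fin]
    norm_num

open Classical in
/-- Number of even permutations that generate the alternating group together with `ρ`. -/
noncomputable def num (ρ : S) : ℕ :=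
  ∑ σ : S, if Equiv.Perm.sign σ = 1 then
    (if Subgroup.closure {ρ, σ} = alternatingGroup (Fin 7) then 1 else 0) else 0

/-- Number of pairs that pass the test for generation. -/
noncomputable def total (d : Datum) : ℕ := sumE 7 true fun l => force (pack l) (cls d)

/-- The count that has to be computed for a datum. -/
def Chk (d : Datum) (N : ℕ) : Prop := Nat.beq (total d) N = true

theorem num_eq (d : Datum) (hd : Valid d) (ρ : S) (hρ : code ρ = d.R)
    (hρ1 : Equiv.Perm.sign ρ = 1) (N : ℕ) (hN : N < 10000000)
    (hs : Chk d N) : num ρ = N := by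
  classical
  unfold Chk total at hs
  simp only [force_eq] at hs
  rw [Nat.beq_eq, sumE_eq] at hs
  rw [← hs]
  unfold num
  refine Finset.sum_congr rfl fun σ _ => ?_
  have hsg : sg true = 1 := rfl
  rw [hsg] at hs ⊢
  by_cases hσ : Equiv.Perm.sign σ = 1
  · rw [if_pos hσ, if_pos hσ]
    have hle : cls d (code σ) ≤ N := by
      rw [← hs]
      have := Finset.single_le_sum (f := fun σ : S =>
        if Equiv.Perm.sign σ = 1 then cls d (pack (lst σ)) else 0)
        (fun _ _ => Nat.zero_le _) (Finset.mem_univ σ)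
      simp only [if_pos hσ] at this
      exact this
    show _ = cls d (code σ)
    unfold cls at hle ⊢
    cases h1 : anyPres (code σ) d.fams
    · cases h2 : anyWord d.R (code σ) d.words
      · rw [h1, h2] at hle
        exact absurd hle (by simp only; omega)
      · rw [if_pos (cls_one d hd ρ σ hρ hρ1 hσ h1 h2)]
    · rw [if_neg (cls_zero d hd ρ σ hρ h1)]
  · rw [if_neg hσ, if_neg hσ]

/-- Words are written as lists of letters: `r` for the first permutation. -/
abbrev r : Bool := true

/-- The letter for the second permutation. -/
abbrev y : Bool := false

/-- Cycle type {3}. -/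
def p3 : S := ⟨![1, 2, 0, 3, 4, 5, 6], ![2, 0, 1, 3, 4, 5, 6], by decide, by decide⟩

/-- Data for `p3`. -/
def d3 : Datum where
  R := 1754641
  fams := [([[0, 1, 2, 3, 4, 5]], [63]),
    ([[0, 1, 2, 3, 4, 6]], [95]),
    ([[0, 1, 2, 3, 5, 6]], [111]),
    ([[0, 1, 2, 4, 5, 6]], [119]),
    ([[0, 1, 2, 3, 4]], [31]),
    ([[0, 1, 2, 3, 5]], [47]),
    ([[0, 1, 2, 3, 6]], [79]),
    ([[0, 1, 2, 4, 5]], [55]),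
    ([[0, 1, 2, 4, 6]], [87]),
    ([[0, 1, 2, 5, 6]], [103]),
    ([[0, 1, 2]], [7]),
    ([[0, 1, 2, 3]], [15]),
    ([[0, 1, 2, 4]], [23]),
    ([[0, 1, 2, 5]], [39]),
    ([[0, 1, 2, 6]], [71])]
  words := [[r]]

theorem sum_3 : Chk d3 1080 := by
  unfold Chk
  decide +kernel

theorem valid_3 : Valid d3 := by
  decide +kernel

theorem code_3 : code p3 = d3.R := by
  decide +kernel

theorem sign_3 : Equiv.Perm.sign p3 = 1 := by
  decide +kernel

theorem num_3 : num p3 = 1080 :=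
  num_eq d3 valid_3 p3 code_3 sign_3 1080 (by norm_num) sum_3

/-- Cycle type {2, 2}. -/
def p22 : S := ⟨![1, 0, 3, 2, 4, 5, 6], ![1, 0, 3, 2, 4, 5, 6], by decide, by decide⟩

/-- Data for `p22`. -/
def d22 : Datum where
  R := 1754305
  fams := [([[0, 1, 2, 3, 4, 5]], [63]),
    ([[0, 1, 2, 3, 4, 6]], [95]),
    ([[0, 1, 2, 3, 5, 6]], [111]),
    ([[0, 1]], [3]),
    ([[0, 1, 2, 3, 4]], [31]),
    ([[0, 1, 2, 3, 5]], [47]),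
    ([[0, 1, 2, 3, 6]], [79]),
    ([[0, 1, 4, 5, 6]], [115]),
    ([[0, 1, 2, 3]], [15]),
    ([[0, 1, 4]], [19]),
    ([[0, 1, 4, 5]], [51]),
    ([[0, 1, 4, 6]], [83]),
    ([[0, 1, 5]], [35]),
    ([[0, 1, 5, 6]], [99]),
    ([[0, 1, 6]], [67]),
    ([[0, 1, 4], [0, 2, 5], [0, 3, 6], [1, 2, 6], [1, 3, 5], [2, 3, 4], [4, 5, 6]], [19, 37, 73, 70, 42, 28, 112]),
    ([[0, 1, 4], [0, 2, 6], [0, 3, 5], [1, 2, 5], [1, 3, 6], [2, 3, 4], [4, 5, 6]], [19, 69, 41, 38, 74, 28, 112]),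
    ([[0, 1, 5], [0, 2, 4], [0, 3, 6], [1, 2, 6], [1, 3, 4], [2, 3, 5], [4, 5, 6]], [35, 21, 73, 70, 26, 44, 112]),
    ([[0, 1, 5], [0, 2, 6], [0, 3, 4], [1, 2, 4], [1, 3, 6], [2, 3, 5], [4, 5, 6]], [35, 69, 25, 22, 74, 44, 112]),
    ([[0, 1, 6], [0, 2, 4], [0, 3, 5], [1, 2, 5], [1, 3, 4], [2, 3, 6], [4, 5, 6]], [67, 21, 41, 38, 26, 76, 112]),
    ([[0, 1, 6], [0, 2, 5], [0, 3, 4], [1, 2, 4], [1, 3, 5], [2, 3, 6], [4, 5, 6]], [67, 37, 25, 22, 42, 76, 112])]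
  words := [[r, y, r, y, y, y, y, y, y],
    [r, y, y],
    [r, y, y, y, r, y, y, y, y],
    [r, y],
    [r, y, r, y, y, y]]

theorem sum_22 : Chk d22 720 := by
  unfold Chk
  decide +kernel

theorem valid_22 : Valid d22 := by
  decide +kernel

theorem code_22 : code p22 = d22.R := by
  decide +kernel

theorem sign_22 : Equiv.Perm.sign p22 = 1 := by
  decide +kernel

theorem num_22 : num p22 = 720 :=
  num_eq d22 valid_22 p22 code_22 sign_22 720 (by norm_num) sum_22

/-- Cycle type {3, 3}. -/
def p33 : S := ⟨![1, 2, 0, 4, 5, 3, 6], ![2, 0, 1, 5, 3, 4, 6], by decide, by decide⟩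

/-- Data for `p33`. -/
def d33 : Datum where
  R := 1693713
  fams := [([[0, 1, 2, 3, 4, 5]], [63]),
    ([[0, 1, 2]], [7]),
    ([[0, 1, 2, 6]], [71]),
    ([[0, 1, 2], [0, 3, 4], [0, 5, 6], [1, 3, 6], [1, 4, 5], [2, 3, 5], [2, 4, 6]], [7, 25, 97, 74, 50, 44, 84]),
    ([[0, 1, 2], [0, 3, 5], [0, 4, 6], [1, 3, 4], [1, 5, 6], [2, 3, 6], [2, 4, 5]], [7, 41, 81, 26, 98, 76, 52]),
    ([[0, 1, 2], [0, 3, 6], [0, 4, 5], [1, 3, 5], [1, 4, 6], [2, 3, 4], [2, 5, 6]], [7, 73, 49, 42, 82, 28, 100]),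
    ([[0, 1, 3], [0, 2, 5], [0, 4, 6], [1, 2, 4], [1, 5, 6], [2, 3, 6], [3, 4, 5]], [11, 37, 81, 22, 98, 76, 56]),
    ([[0, 1, 4], [0, 2, 3], [0, 5, 6], [1, 2, 5], [1, 3, 6], [2, 4, 6], [3, 4, 5]], [19, 13, 97, 38, 74, 84, 56]),
    ([[0, 1, 5], [0, 2, 4], [0, 3, 6], [1, 2, 3], [1, 4, 6], [2, 5, 6], [3, 4, 5]], [35, 21, 73, 14, 82, 100, 56])]
  words := [[y],
    [r, y],
    [r, r, y],
    [r, r, y, y, r, y, y, y],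
    [r, r, y, r, y, y, r, y, y, y],
    [r, r, y, r, y, y, r, y, y],
    [r, r, y, r, y, r, y, y, r, y],
    [r, r, y, y, r, y, y, r, y, r, y],
    [r, r, y, y, r, r, y, y, r, y],
    [r, y, y]]

theorem sum_33 : Chk d33 1404 := by
  unfold Chk
  decide +kernel

theorem valid_33 : Valid d33 := by
  decide +kernel

theorem code_33 : code p33 = d33.R := by
  decide +kernel

theorem sign_33 : Equiv.Perm.sign p33 = 1 := by
  decide +kernel

theorem num_33 : num p33 = 1404 :=
  num_eq d33 valid_33 p33 code_33 sign_33 1404 (by norm_num) sum_33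

/-- Cycle type {3, 2, 2}. -/
def p322 : S := ⟨![1, 2, 0, 4, 3, 6, 5], ![2, 0, 1, 4, 3, 6, 5], by decide, by decide⟩

/-- Data for `p322`. -/
def d322 : Datum where
  R := 1521681
  fams := [([[0, 1, 2, 3, 4]], [31]),
    ([[0, 1, 2, 5, 6]], [103]),
    ([[0, 1, 2]], [7])]
  words := [[r]]

theorem sum_322 : Chk d322 2232 := by
  unfold Chk
  decide +kernel

theorem valid_322 : Valid d322 := by
  decide +kernel

theorem code_322 : code p322 = d322.R := by
  decide +kernel

theorem sign_322 : Equiv.Perm.sign p322 = 1 := by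
  decide +kernel

theorem num_322 : num p322 = 2232 :=
  num_eq d322 valid_322 p322 code_322 sign_322 2232 (by norm_num) sum_322

/-- Cycle type {4, 2}. -/
def p42 : S := ⟨![1, 2, 3, 0, 5, 4, 6], ![3, 0, 1, 2, 5, 4, 6], by decide, by decide⟩

/-- Data for `p42`. -/
def d42 : Datum where
  R := 1724625
  fams := [([[0, 1, 2, 3, 4, 5]], [63]),
    ([[0, 1, 2, 3, 6]], [79]),
    ([[0, 1, 2, 3]], [15]),
    ([[0, 1, 4], [0, 2, 6], [0, 3, 5], [1, 2, 5], [1, 3, 6], [2, 3, 4], [4, 5, 6]], [19, 69, 41, 38, 74, 28, 112]),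
    ([[0, 1, 5], [0, 2, 6], [0, 3, 4], [1, 2, 4], [1, 3, 6], [2, 3, 5], [4, 5, 6]], [35, 69, 25, 22, 74, 44, 112])]
  words := [[y],
    [r, y],
    [r, r, y, y],
    [r, r, y, r, r, y, y, y],
    [r, r, y],
    [r, r, y, r, y, y],
    [r, r, y, y, y, r, y, r, y, y],
    [r, r, y, y, r, y],
    [r, r, r, y, r, y, r, r, y],
    [r, r, y, y, y, r, y],
    [r, r, r, y, r, r, y, r, y],
    [r, r, r, y, y, r, r, y],
    [r, r, r, y, r, y],
    [r, y, y],
    [r, r, r, y]]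

theorem sum_42 : Chk d42 1760 := by
  unfold Chk
  decide +kernel

theorem valid_42 : Valid d42 := by
  decide +kernel

theorem code_42 : code p42 = d42.R := by
  decide +kernel

theorem sign_42 : Equiv.Perm.sign p42 = 1 := by
  decide +kernel

theorem num_42 : num p42 = 1760 :=
  num_eq d42 valid_42 p42 code_42 sign_42 1760 (by norm_num) sum_42

/-- Cycle type {5}. -/
def p5 : S := ⟨![1, 2, 3, 4, 0, 5, 6], ![4, 0, 1, 2, 3, 5, 6], by decide, by decide⟩

/-- Data for `p5`. -/
def d5 : Datum where
  R := 1738961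
  fams := [([[0, 1, 2, 3, 4, 5]], [63]),
    ([[0, 1, 2, 3, 4, 6]], [95]),
    ([[0, 1, 2, 3, 4]], [31])]
  words := [[y],
    [r, y, r, y, y, y],
    [r, y],
    [r, r, y],
    [r, r, y, y],
    [r, y, y, y],
    [r, y, y, y, r, r, y, y, r, r, y, y],
    [r, r, y, r, r, y, y, y],
    [r, r, y, y, r, y, r, y],
    [r, r, y, y, r, y, y],
    [r, r, y, r, y, r, r, y, y, y],
    [r, r, r, y, r, r, r, y, y, r, y],
    [r, r, r, r, y, y, r, y, r, r, y],
    [r, r, r, y, y, r, y, y, y]]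

theorem sum_5 : Chk d5 1800 := by
  unfold Chk
  decide +kernel

theorem valid_5 : Valid d5 := by
  decide +kernel

theorem code_5 : code p5 = d5.R := by
  decide +kernel

theorem sign_5 : Equiv.Perm.sign p5 = 1 := by
  decide +kernel

theorem num_5 : num p5 = 1800 :=
  num_eq d5 valid_5 p5 code_5 sign_5 1800 (by norm_num) sum_5

/-- Cycle type {7}. -/
def p7 : S := ⟨![1, 2, 3, 4, 5, 6, 0], ![6, 0, 1, 2, 3, 4, 5], by decide, by decide⟩

/-- Data for `p7`. -/
def d7 : Datum where
  R := 219345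
  fams := [([[0, 1, 3], [0, 2, 6], [0, 4, 5], [1, 2, 4], [1, 5, 6], [2, 3, 5], [3, 4, 6]], [11, 69, 49, 22, 98, 44, 88]),
    ([[0, 1, 5], [0, 2, 3], [0, 4, 6], [1, 2, 6], [1, 3, 4], [2, 4, 5], [3, 5, 6]], [35, 13, 81, 70, 26, 52, 104])]
  words := [[y],
    [r, y],
    [r, y, y],
    [r, r, r, y],
    [r, r, y],
    [r, r, y, y],
    [r, r, r, y, y],
    [r, r, r, y, r, y],
    [r, y, y, y],
    [r, r, r, y, r, r, y],
    [r, r, y, r, r, y, y],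
    [r, y, y, y, r, y, r, y, r, y, y, y],
    [r, r, y, r, y, y, y, r, r, y, y],
    [r, r, r, r, r, y, y, r, y],
    [r, r, y, y, y, y, y, y, r, y, r, r],
    [r, r, r, y, r, y, y, y, r, y, y],
    [r, r, r, r, y, y, r, r, y],
    [r, y, r, y, y],
    [r, y, y, y, y]]

theorem sum_7 : Chk d7 2205 := by
  unfold Chk
  decide +kernel

theorem valid_7 : Valid d7 := by
  decide +kernel

theorem code_7 : code p7 = d7.R := by
  decide +kernel

theorem sign_7 : Equiv.Perm.sign p7 = 1 := by
  decide +kernel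

theorem num_7 : num p7 = 2205 :=
  num_eq d7 valid_7 p7 code_7 sign_7 2205 (by norm_num) sum_7

/-! ### Conjugacy classes -/

theorem closure_conj (g ρ σ : S) :
    Subgroup.closure {g * ρ * g⁻¹, g * σ * g⁻¹} = alternatingGroup (Fin 7) ↔
      Subgroup.closure {ρ, σ} = alternatingGroup (Fin 7) := by
  have h : Subgroup.closure {g * ρ * g⁻¹, g * σ * g⁻¹} =
      (Subgroup.closure {ρ, σ}).map (MulAut.conj g).toMonoidHom := by
    rw [MonoidHom.map_closure, Set.image_pair]
    rfl
  have h2 : (alternatingGroup (Fin 7)).map (MulAut.conj g).toMonoidHom =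
      alternatingGroup (Fin 7) := Subgroup.Normal.map_conj_eq _ g
  rw [h]
  constructor
  · intro h3
    rw [← h2] at h3
    exact Subgroup.map_injective (MulAut.conj g).injective h3
  · intro h3
    rw [h3, h2]

theorem num_conj (g ρ : S) : num (g * ρ * g⁻¹) = num ρ := by
  classical
  unfold num
  rw [← Equiv.sum_comp (MulAut.conj g).toEquiv]
  refine Finset.sum_congr rfl fun σ _ => ?_
  have h1 : (MulAut.conj g).toEquiv σ = g * σ * g⁻¹ := rfl
  have h2 : Equiv.Perm.sign (g * σ * g⁻¹) = Equiv.Perm.sign σ := by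
    rw [map_mul, map_mul, mul_right_comm, ← map_mul, mul_inv_cancel, map_one, one_mul]
  rw [h1, h2]
  simp only [closure_conj]

theorem num_of_cycleType (ρ τ : S) (h : ρ.cycleType = τ.cycleType) : num ρ = num τ := by
  rw [← Equiv.Perm.isConj_iff_cycleType_eq, isConj_iff] at h
  obtain ⟨g, rfl⟩ := h
  rw [num_conj]

theorem num_one : num 1 = 0 := by
  classical
  unfold num
  refine Finset.sum_eq_zero fun σ _ => ?_
  have : Subgroup.closure {1, σ} ≠ alternatingGroup (Fin 7) := by
    intro h
    have h1 : Subgroup.closure {1, σ} ≤ Subgroup.zpowers σ := by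
      rw [Subgroup.closure_le]
      rintro x (rfl | hx)
      · exact one_mem _
      · rw [Set.mem_singleton_iff] at hx
        subst hx
        exact Subgroup.mem_zpowers x
    have h7 := c7_mem
    have h3 := c3_mem
    rw [← h] at h7 h3
    obtain ⟨a, ha⟩ := Subgroup.mem_zpowers_iff.1 (h1 h7)
    obtain ⟨b, hb⟩ := Subgroup.mem_zpowers_iff.1 (h1 h3)
    have hc : c7 * c3 = c3 * c7 := by
      rw [← ha, ← hb, ← zpow_add, ← zpow_add, add_comm]
    exact absurd hc (by decide +kernel)
  rw [if_neg this, ite_self]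

/-- The cycle types of even permutations. -/
theorem cycleType_cases (ρ : S) (h : Equiv.Perm.sign ρ = 1) :
    ρ.cycleType = 0 ∨ ρ.cycleType = {3} ∨ ρ.cycleType = {2, 2} ∨ ρ.cycleType = {3, 3} ∨
    ρ.cycleType = {3, 2, 2} ∨ ρ.cycleType = {4, 2} ∨ ρ.cycleType = {5} ∨
    ρ.cycleType = {7} := by
  rw [Equiv.Perm.sign_of_cycleType] at h
  have h2 : ∀ n ∈ ρ.cycleType, 2 ≤ n := fun n hn => Equiv.Perm.two_le_of_mem_cycleType hn
  have h7 : ρ.cycleType.sum ≤ 7 := by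
    rw [Equiv.Perm.sum_cycleType]
    exact (Finset.card_le_univ _).trans (by simp)
  generalize ρ.cycleType = m at h h2 h7
  induction m using Quotient.inductionOn with
  | h l =>
    change (-1 : ℤˣ) ^ (Multiset.sum (l : Multiset ℕ) + Multiset.card (l : Multiset ℕ)) = 1 at h
    change Multiset.sum (l : Multiset ℕ) ≤ 7 at h7
    change ∀ n ∈ (l : Multiset ℕ), 2 ≤ n at h2
    change (l : Multiset ℕ) = 0 ∨ (l : Multiset ℕ) = {3} ∨ (l : Multiset ℕ) = {2, 2} ∨
      (l : Multiset ℕ) = {3, 3} ∨ (l : Multiset ℕ) = {3, 2, 2} ∨ (l : Multiset ℕ) = {4, 2} ∨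
      (l : Multiset ℕ) = {5} ∨ (l : Multiset ℕ) = {7}
    simp only [Multiset.sum_coe, Multiset.coe_card, Multiset.mem_coe] at h h7 h2
    match l with
    | [] => exact Or.inl rfl
    | [a] =>
      simp only [List.mem_cons, List.not_mem_nil, or_false, forall_eq, List.sum_cons,
        List.sum_nil, add_zero, List.length_cons, List.length_nil] at h h7 h2
      interval_cases a <;> revert h <;> decide
    | [a, b] =>
      have ha := h2 a (by simp)
      have hb := h2 b (by simp)
      simp only [List.sum_cons, List.sum_nil, add_zero, List.length_cons,
        List.length_nil] at h h7
      have ha' : a ≤ 5 := by omega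
      have hb' : b ≤ 5 := by omega
      clear h2
      interval_cases a <;> interval_cases b <;> first | omega | (revert h; decide)
    | [a, b, c] =>
      have ha := h2 a (by simp)
      have hb := h2 b (by simp)
      have hc := h2 c (by simp)
      simp only [List.sum_cons, List.sum_nil, add_zero, List.length_cons,
        List.length_nil] at h h7
      have ha' : a ≤ 3 := by omega
      have hb' : b ≤ 3 := by omega
      have hc' : c ≤ 3 := by omega
      clear h2
      interval_cases a <;> interval_cases b <;> interval_cases c <;>
        first | omega | (revert h; decide)
    | a :: b :: c :: d :: l =>
      have ha := h2 a (by simp)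
      have hb := h2 b (by simp)
      have hc := h2 c (by simp)
      have hd := h2 d (by simp)
      simp only [List.sum_cons] at h7
      omega

/-- Contribution of one cycle type. -/
theorem class_sum (m : Multiset ℕ) (N C : ℕ)
    (hC : (if m.sum ≤ 7 ∧ ∀ a ∈ m, 2 ≤ a then
      Nat.factorial 7 / (Nat.factorial (7 - m.sum) * m.prod *
        ∏ n ∈ m.toFinset, Nat.factorial (Multiset.count n m)) else 0) = C) :
    (∑ ρ : S, if ρ.cycleType = m then N else 0) = C * N := by
  rw [← Finset.sum_filter, Finset.sum_const, smul_eq_mul, Equiv.Perm.card_of_cycleType,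
    Fintype.card_fin, hC]

theorem num_table (ρ : S) : (if Equiv.Perm.sign ρ = 1 then num ρ else 0) =
    (if ρ.cycleType = {3} then 1080 else 0) + (if ρ.cycleType = {2, 2} then 720 else 0) +
    (if ρ.cycleType = {3, 3} then 1404 else 0) + (if ρ.cycleType = {3, 2, 2} then 2232 else 0) +
    (if ρ.cycleType = {4, 2} then 1760 else 0) + (if ρ.cycleType = {5} then 1800 else 0) +
    (if ρ.cycleType = {7} then 2205 else 0) := by
  by_cases h : Equiv.Perm.sign ρ = 1
  · rw [if_pos h]
    rcases cycleType_cases ρ h with h | h | h | h | h | h | h | h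
    · rw [h, Equiv.Perm.cycleType_eq_zero.1 h, num_one]; decide
    · rw [num_of_cycleType ρ p3 (h.trans (by decide +kernel)), num_3, h]; decide
    · rw [num_of_cycleType ρ p22 (h.trans (by decide +kernel)), num_22, h]; decide
    · rw [num_of_cycleType ρ p33 (h.trans (by decide +kernel)), num_33, h]; decide
    · rw [num_of_cycleType ρ p322 (h.trans (by decide +kernel)), num_322, h]; decide
    · rw [num_of_cycleType ρ p42 (h.trans (by decide +kernel)), num_42, h]; decide
    · rw [num_of_cycleType ρ p5 (h.trans (by decide +kernel)), num_5, h]; decide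
    · rw [num_of_cycleType ρ p7 (h.trans (by decide +kernel)), num_7, h]; decide
  · rw [if_neg h]
    rw [Equiv.Perm.sign_of_cycleType] at h
    have key : ∀ m : Multiset ℕ, (-1 : ℤˣ) ^ (m.sum + m.card) = 1 → ρ.cycleType ≠ m := by
      rintro m hm rfl
      exact h hm
    rw [if_neg (key _ (by decide)), if_neg (key _ (by decide)), if_neg (key _ (by decide)),
      if_neg (key _ (by decide)), if_neg (key _ (by decide)), if_neg (key _ (by decide)),
      if_neg (key _ (by decide))]

theorem sum_seven {ι : Type*} [Fintype ι] (h a b c d e f g : ι → ℕ) {A B C D E F G : ℕ}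
    (hh : ∀ i, h i = a i + b i + c i + d i + e i + f i + g i)
    (ha : ∑ i, a i = A) (hb : ∑ i, b i = B) (hc : ∑ i, c i = C) (hd : ∑ i, d i = D)
    (he : ∑ i, e i = E) (hf : ∑ i, f i = F) (hg : ∑ i, g i = G) :
    ∑ i, h i = A + B + C + D + E + F + G := by
  rw [Finset.sum_congr rfl fun i _ => hh i]
  simp only [Finset.sum_add_distrib, ha, hb, hc, hd, he, hf, hg]

theorem sum_num_aux : (∑ ρ : S, if Equiv.Perm.sign ρ = 1 then num ρ else 0) =
    70 * 1080 + 105 * 720 + 280 * 1404 + 210 * 2232 + 630 * 1760 + 504 * 1800 + 720 * 2205 :=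
  sum_seven _ _ _ _ _ _ _ _ num_table
    (class_sum {3} 1080 70 (by decide +kernel))
    (class_sum {2, 2} 720 105 (by decide +kernel))
    (class_sum {3, 3} 1404 280 (by decide +kernel))
    (class_sum {3, 2, 2} 2232 210 (by decide +kernel))
    (class_sum {4, 2} 1760 630 (by decide +kernel))
    (class_sum {5} 1800 504 (by decide +kernel))
    (class_sum {7} 2205 720 (by decide +kernel))

theorem sum_num : (∑ ρ : S, if Equiv.Perm.sign ρ = 1 then num ρ else 0) = 4616640 := by
  rw [sum_num_aux]

/-! ### Back to the alternating group -/

theorem closure_top_iff (x y : alternatingGroup (Fin 7)) :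
    Subgroup.closure {x, y} = ⊤ ↔
      Subgroup.closure {(x : S), (y : S)} = alternatingGroup (Fin 7) := by
  have h : Subgroup.closure {(x : S), (y : S)} =
      (Subgroup.closure {x, y}).map (alternatingGroup (Fin 7)).subtype := by
    rw [MonoidHom.map_closure, Set.image_pair]
    rfl
  have h2 : (⊤ : Subgroup (alternatingGroup (Fin 7))).map (alternatingGroup (Fin 7)).subtype =
      alternatingGroup (Fin 7) := by
    rw [← MonoidHom.range_eq_map, Subgroup.range_subtype]
  constructor
  · intro h3
    rw [h, h3, h2]
  · intro h3
    rw [h] at h3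
    exact Subgroup.map_injective (Subgroup.subtype_injective _) (h3.trans h2.symm)

theorem sum_alt (f : S → ℕ) : (∑ x : alternatingGroup (Fin 7), f x) =
    ∑ ρ : S, if Equiv.Perm.sign ρ = 1 then f ρ else 0 := by
  rw [← Finset.sum_filter]
  symm
  apply Finset.sum_subtype
  intro ρ
  rw [Finset.mem_filter, Equiv.Perm.mem_alternatingGroup]
  simp

theorem card_pairs : Nat.card {v : alternatingGroup (Fin 7) × alternatingGroup (Fin 7) //
    Subgroup.closure {v.1, v.2} = ⊤} = 4616640 := by
  classical
  rw [Nat.card_eq_fintype_card, Fintype.card_subtype, Finset.card_filter, Fintype.sum_prod_type,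
    ← sum_num, ← sum_alt]
  refine Finset.sum_congr rfl fun x _ => ?_
  unfold num
  rw [← sum_alt fun σ => if Subgroup.closure {(x : S), σ} = alternatingGroup (Fin 7) then 1 else 0]
  refine Finset.sum_congr rfl fun y _ => ?_
  simp only [closure_top_iff]

theorem card_alt : Nat.card (alternatingGroup (Fin 7)) = 2520 := by
  rw [nat_card_alternatingGroup, Nat.card_eq_fintype_card, Fintype.card_fin]
  rfl

end A7

/-- The probability that two random elements of `Alt(7)` generate it is `229/315`. -/
theorem stmt7 : genProb2 (alternatingGroup (Fin 7)) = 229 / 315 := by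
  unfold genProb2
  rw [A7.card_pairs, A7.card_alt]
  norm_num
end

section
/- For a finite nilpotent group G, e(G) ≤ d(G) + 2.1185, where d(G) is the minimal number of generators of G and e(G) the expected number of uniformly random elements needed to generate G. Consequently, for every g ∈ G, e(G) - e(G,g) ≤ 3.1185. -/
open Subgroup

/-- `d(G)`: the minimal number of generators of `G`. -/
noncomputable def dMin (G : Type*) [Group G] : ℕ :=
  sInf {n : ℕ | ∃ S : Finset G, S.card = n ∧ Subgroup.closure (S : Set G) = ⊤}


/-- the tail `ζ(j) - 1` -/
noncomputable def zu (j : ℕ) : ℝ := ∑' n : ℕ, 1 / ((n : ℝ) + 2) ^ j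

lemma zu_summable {j : ℕ} (hj : 2 ≤ j) : Summable (fun n : ℕ => 1 / ((n : ℝ) + 2) ^ j) := by
  have h := (Real.summable_one_div_nat_pow (p := j)).2 (by omega)
  have h2 := (summable_nat_add_iff 2).2 h
  simpa using h2

lemma zu_nonneg (j : ℕ) : 0 ≤ zu j := tsum_nonneg fun n => by positivity

lemma zt_eq {j : ℕ} (hj : 2 ≤ j) : ∑' n : ℕ, 1 / (n : ℝ) ^ j = 1 + zu j := by
  have h := (Real.summable_one_div_nat_pow (p := j)).2 (by omega)
  rw [← h.sum_add_tsum_nat_add 2]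
  have : (0 : ℝ) ^ j = 0 := zero_pow (by omega)
  simp [Finset.sum_range_succ, this, zu]

lemma zu_half {j : ℕ} (hj : 2 ≤ j) : zu (j + 1) ≤ zu j / 2 := by
  unfold zu
  rw [← tsum_div_const]
  refine Summable.tsum_le_tsum (fun n => ?_) (zu_summable (by omega)) ((zu_summable hj).div_const 2)
  rw [pow_succ, div_div]
  gcongr
  linarith [(Nat.cast_nonneg n : (0 : ℝ) ≤ n)]

lemma zu_geom {j : ℕ} (hj : 2 ≤ j) (m : ℕ) : zu (j + m) ≤ zu j / 2 ^ m := by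
  induction m with
  | zero => simp
  | succ m ih =>
    have := zu_half (j := j + m) (by omega)
    rw [← add_assoc, pow_succ, ← div_div]
    linarith

lemma zt_bound (i N : ℕ) (hN : 1 ≤ N) :
    1 + zu (i + 3) ≤ ∑ n ∈ Finset.range (N + 1), 1 / (n : ℝ) ^ (i + 3) +
      1 / (((N : ℝ) + 1) ^ i * (2 * N * (N + 1))) := by
  rw [← zt_eq (by omega)]
  have hN' : (1 : ℝ) ≤ N := by exact_mod_cast hN
  have key : ∀ M : ℕ, ∑ n ∈ Finset.range (N + 1 + M), 1 / (n : ℝ) ^ (i + 3) ≤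
      ∑ n ∈ Finset.range (N + 1), 1 / (n : ℝ) ^ (i + 3) +
      1 / (((N : ℝ) + 1) ^ i * (2 * N * (N + 1))) -
      1 / (((N : ℝ) + 1) ^ i * (2 * (N + M) * (N + M + 1))) := by
    intro M
    induction M with
    | zero => simp
    | succ M ih =>
      rw [← add_assoc, Finset.sum_range_succ]
      have hM : (0 : ℝ) ≤ M := Nat.cast_nonneg M
      have e : (1 : ℝ) / (((N + 1 + M : ℕ) : ℝ) ^ (i + 3)) ≤
          1 / (((N : ℝ) + 1) ^ i * ((N + M) * (N + M + 1) * (N + M + 2))) := by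
        rw [pow_add]
        push_cast
        apply one_div_le_one_div_of_le
        · positivity
        · apply mul_le_mul
          · exact pow_le_pow_left₀ (by positivity) (by linarith) _
          · nlinarith
          · positivity
          · positivity
      have e2 : 1 / (((N : ℝ) + 1) ^ i * ((N + M) * (N + M + 1) * (N + M + 2))) =
          1 / (((N : ℝ) + 1) ^ i * (2 * (N + M) * (N + M + 1))) -
          1 / (((N : ℝ) + 1) ^ i * (2 * (N + (M + 1 : ℕ)) * (N + (M + 1 : ℕ) + 1))) := by
        push_cast
        have h1 : (N : ℝ) + M ≠ 0 := by positivity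
        have h2 : (N : ℝ) + M + 1 ≠ 0 := by positivity
        have h3 : (N : ℝ) + M + 2 ≠ 0 := by positivity
        have h4 : (N : ℝ) + (M + 1) + 1 ≠ 0 := by positivity
        have h5 : (N : ℝ) + (M + 1) ≠ 0 := by positivity
        have h6 : ((N : ℝ) + 1) ^ i ≠ 0 := by positivity
        field_simp
        ring
      linarith
  refine Real.tsum_le_of_sum_range_le (fun n => by positivity) (fun M => ?_)
  refine le_trans (Finset.sum_le_sum_of_subset_of_nonneg (t := Finset.range (N + 1 + M)) ?_ ?_)
    ((key M).trans ?_)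
  · apply Finset.range_subset_range.2; omega
  · intros; positivity
  · have : 0 ≤ 1 / (((N : ℝ) + 1) ^ i * (2 * (N + M) * (N + M + 1))) := by positivity
    linarith

lemma prod_ge_one_sub_sum (a : ℕ → ℝ) (h0 : ∀ j, 0 ≤ a j) (s : Finset ℕ) :
    1 - ∑ j ∈ s, a j ≤ ∏ j ∈ s, 1 / (1 + a j) := by
  induction s using Finset.induction_on with
  | empty => simp
  | insert x s hx ih =>
    rw [Finset.sum_insert hx, Finset.prod_insert hx]
    have hp : ∏ j ∈ s, 1 / (1 + a j) ≤ 1 := by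
      apply Finset.prod_le_one
      · intro j _; have := h0 j; positivity
      · intro j _; have := h0 j; rw [div_le_one (by positivity)]; linarith
    have hx0 := h0 x
    have h1 : 1 - a x ≤ 1 / (1 + a x) := by
      rw [le_div_iff₀ (by positivity)]; nlinarith
    have hp0 : 0 ≤ ∏ j ∈ s, 1 / (1 + a j) :=
      Finset.prod_nonneg fun j _ => by have := h0 j; positivity
    nlinarith

lemma sum_zu_le {k : ℕ} (hk : 2 ≤ k) (M : ℕ) : ∑ j ∈ Finset.Ico k M, zu j ≤ 2 * zu k := by
  rw [Finset.sum_Ico_eq_sum_range]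
  have h : ∀ L : ℕ, ∑ i ∈ Finset.range L, zu (k + i) ≤ 2 * zu k - 2 * (zu k / 2 ^ L) := by
    intro L
    induction L with
    | zero => simp
    | succ L ih =>
      rw [Finset.sum_range_succ]
      have := zu_geom hk L
      rw [pow_succ, ← div_div]
      linarith
  have h2 : 0 ≤ zu k / 2 ^ (M - k) := by have := zu_nonneg k; positivity
  linarith [h (M - k)]

/-- lower bound for all partial products `∏_{j ≥ k} ζ(j)⁻¹` -/
def PB (k : ℕ) (r : ℝ) : Prop := ∀ M, r ≤ ∏ j ∈ Finset.Ico k M, 1 / (1 + zu j)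

lemma PB_tail {k : ℕ} (hk : 2 ≤ k) : PB k (1 - 2 * zu k) := by
  intro M
  have := prod_ge_one_sub_sum zu zu_nonneg (Finset.Ico k M)
  linarith [sum_zu_le hk M]

lemma PB_mono {k : ℕ} {r r' : ℝ} (h : PB k r) (hr : r' ≤ r) : PB k r' :=
  fun M => hr.trans (h M)

lemma PB_step {k : ℕ} {r r' z : ℝ} (h : PB (k + 1) r) (hz : 1 + zu k ≤ z) (h0 : 0 ≤ r')
    (hr : r' * z ≤ r) : PB k r' := by
  have h1 : r ≤ 1 := by simpa using h 0
  have hz0 := zu_nonneg k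
  intro M
  rcases le_or_gt M k with hM | hM
  · rw [Finset.Ico_eq_empty (by omega)]
    simp
    nlinarith
  · rw [Finset.prod_eq_prod_Ico_succ_bot hM]
    have h2 := h M
    rw [one_div, inv_mul_eq_div, le_div_iff₀ (by positivity)]
    nlinarith

lemma zu_two : 1 + zu 2 ≤ 1.64493452 := by
  rw [← zt_eq le_rfl, hasSum_zeta_two.tsum_eq]
  have := Real.pi_lt_d6
  have := Real.pi_gt_three
  nlinarith

lemma zu_b3 : 1 + zu 3 ≤ 1202058320 / 10 ^ 9 := by
  refine (zt_bound 0 20 (by norm_num)).trans ?_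
  norm_num [Finset.sum_range_succ]

lemma zu_b4 : 1 + zu 4 ≤ 1082325655 / 10 ^ 9 := by
  refine (zt_bound 1 40 (by norm_num)).trans ?_
  norm_num [Finset.sum_range_succ]

lemma zu_b5 : 1 + zu 5 ≤ 1036929043 / 10 ^ 9 := by
  refine (zt_bound 2 20 (by norm_num)).trans ?_
  norm_num [Finset.sum_range_succ]

lemma zu_b6 : 1 + zu 6 ≤ 1017344929 / 10 ^ 9 := by
  refine (zt_bound 3 10 (by norm_num)).trans ?_
  norm_num [Finset.sum_range_succ]

lemma zu_b7 : 1 + zu 7 ≤ 1008349467 / 10 ^ 9 := by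
  refine (zt_bound 4 10 (by norm_num)).trans ?_
  norm_num [Finset.sum_range_succ]

lemma zu_b8 : 1 + zu 8 ≤ 1004077376 / 10 ^ 9 := by
  refine (zt_bound 5 10 (by norm_num)).trans ?_
  norm_num [Finset.sum_range_succ]

lemma zu_b9 : 1 + zu 9 ≤ 1002008396 / 10 ^ 9 := by
  refine (zt_bound 6 10 (by norm_num)).trans ?_
  norm_num [Finset.sum_range_succ]

lemma zu_b10 : 1 + zu 10 ≤ 1000994577 / 10 ^ 9 := by
  refine (zt_bound 7 10 (by norm_num)).trans ?_
  norm_num [Finset.sum_range_succ]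

lemma zu_b11 : 1 + zu 11 ≤ 1000494190 / 10 ^ 9 := by
  refine (zt_bound 8 10 (by norm_num)).trans ?_
  norm_num [Finset.sum_range_succ]

lemma zu_b12 : 1 + zu 12 ≤ 1000246088 / 10 ^ 9 := by
  refine (zt_bound 9 10 (by norm_num)).trans ?_
  norm_num [Finset.sum_range_succ]

lemma zu_b13 : 1 + zu 13 ≤ 1000122715 / 10 ^ 9 := by
  refine (zt_bound 10 10 (by norm_num)).trans ?_
  norm_num [Finset.sum_range_succ]

lemma zu_b14 : 1 + zu 14 ≤ 1000061250 / 10 ^ 9 := by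
  refine (zt_bound 11 10 (by norm_num)).trans ?_
  norm_num [Finset.sum_range_succ]

lemma PB_15 : PB 15 (999938750 / 10 ^ 9) := by
  refine PB_mono (PB_tail (by norm_num)) ?_
  have h1 := zu_half (j := 14) (by norm_num)
  have h2 := zu_b14
  norm_num at h1 h2 ⊢
  linarith

lemma PB_14 : PB 14 (999877507 / 10 ^ 9) :=
  PB_step PB_15 zu_b14 (by norm_num) (by norm_num)

lemma PB_13 : PB 13 (999754822 / 10 ^ 9) :=
  PB_step PB_14 zu_b13 (by norm_num) (by norm_num)

lemma PB_12 : PB 12 (999508854 / 10 ^ 9) :=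
  PB_step PB_13 zu_b12 (by norm_num) (by norm_num)

lemma PB_11 : PB 11 (999015150 / 10 ^ 9) :=
  PB_step PB_12 zu_b11 (by norm_num) (by norm_num)

lemma PB_10 : PB 10 (998022539 / 10 ^ 9) :=
  PB_step PB_11 zu_b10 (by norm_num) (by norm_num)

lemma PB_9 : PB 9 (996022132 / 10 ^ 9) :=
  PB_step PB_10 zu_b9 (by norm_num) (by norm_num)

lemma PB_8 : PB 8 (991977466 / 10 ^ 9) :=
  PB_step PB_9 zu_b8 (by norm_num) (by norm_num)

lemma PB_7 : PB 7 (983763564 / 10 ^ 9) :=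
  PB_step PB_8 zu_b7 (by norm_num) (by norm_num)

lemma PB_6 : PB 6 (966991170 / 10 ^ 9) :=
  PB_step PB_7 zu_b6 (by norm_num) (by norm_num)

lemma PB_5 : PB 5 (932552884 / 10 ^ 9) :=
  PB_step PB_6 zu_b5 (by norm_num) (by norm_num)

lemma PB_4 : PB 4 (861619494 / 10 ^ 9) :=
  PB_step PB_5 zu_b4 (by norm_num) (by norm_num)

lemma PB_3 : PB 3 (716786764 / 10 ^ 9) :=
  PB_step PB_4 zu_b3 (by norm_num) (by norm_num)

lemma PB_2 : PB 2 (435753980 / 10 ^ 9) :=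
  PB_step PB_3 zu_two (by norm_num) (by norm_num)

/-- upper bound for the probability that `d + k` elements do not generate -/
noncomputable def TB : ℕ → ℝ
  | 0 => 1
  | 1 => 564246020 / 10 ^ 9
  | 2 => 283213236 / 10 ^ 9
  | 3 => 138380506 / 10 ^ 9
  | 4 => 67447116 / 10 ^ 9
  | 5 => 33008830 / 10 ^ 9
  | 6 => 16236436 / 10 ^ 9
  | 7 => 8022534 / 10 ^ 9
  | 8 => 3977868 / 10 ^ 9
  | 9 => 1977461 / 10 ^ 9
  | 10 => 984850 / 10 ^ 9
  | 11 => 491146 / 10 ^ 9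
  | 12 => 245178 / 10 ^ 9
  | 13 => 122493 / 10 ^ 9
  | (k + 14) => 61250 / 10 ^ 9 / 2 ^ k

lemma PB_TB (k : ℕ) (hk : 1 ≤ k) : PB (k + 1) (1 - TB k) := by
  match k, hk with
  | 1, _ => exact PB_mono PB_2 (by norm_num [TB])
  | 2, _ => exact PB_mono PB_3 (by norm_num [TB])
  | 3, _ => exact PB_mono PB_4 (by norm_num [TB])
  | 4, _ => exact PB_mono PB_5 (by norm_num [TB])
  | 5, _ => exact PB_mono PB_6 (by norm_num [TB])
  | 6, _ => exact PB_mono PB_7 (by norm_num [TB])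
  | 7, _ => exact PB_mono PB_8 (by norm_num [TB])
  | 8, _ => exact PB_mono PB_9 (by norm_num [TB])
  | 9, _ => exact PB_mono PB_10 (by norm_num [TB])
  | 10, _ => exact PB_mono PB_11 (by norm_num [TB])
  | 11, _ => exact PB_mono PB_12 (by norm_num [TB])
  | 12, _ => exact PB_mono PB_13 (by norm_num [TB])
  | 13, _ => exact PB_mono PB_14 (by norm_num [TB])
  | (k + 14), _ =>
    refine PB_mono (PB_tail (by omega)) ?_
    have h1 := zu_geom (j := 14) (by norm_num) k
    have h2 := zu_half (j := k + 14) (by omega)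
    have h3 := zu_b14
    have h4 : zu 14 / 2 ^ k ≤ 61250 / 10 ^ 9 / 2 ^ k := by
      gcongr
      linarith
    rw [add_comm 14 k] at h1
    simp only [TB]
    linarith

lemma TB_sum (N : ℕ) : ∑ k ∈ Finset.range N, TB k ≤ 2.1185 := by
  have hnn : ∀ k, 0 ≤ TB k := by
    intro k
    match k with
    | 0 => norm_num [TB]
    | 1 => norm_num [TB]
    | 2 => norm_num [TB]
    | 3 => norm_num [TB]
    | 4 => norm_num [TB]
    | 5 => norm_num [TB]
    | 6 => norm_num [TB]
    | 7 => norm_num [TB]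
    | 8 => norm_num [TB]
    | 9 => norm_num [TB]
    | 10 => norm_num [TB]
    | 11 => norm_num [TB]
    | 12 => norm_num [TB]
    | 13 => norm_num [TB]
    | (k + 14) => simp only [TB]; positivity
  have h : ∀ L : ℕ, ∑ k ∈ Finset.range (14 + L), TB k ≤
      2.11849 - 2 * (61250 / 10 ^ 9 / 2 ^ L) := by
    intro L
    induction L with
    | zero => norm_num [TB, Finset.sum_range_succ]
    | succ L ih =>
      rw [← add_assoc, Finset.sum_range_succ, show TB (14 + L) = 61250 / 10 ^ 9 / 2 ^ L by rw [add_comm 14 L]; simp only [TB]]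
      have e : (61250 : ℝ) / 10 ^ 9 / 2 ^ L = 2 * (61250 / 10 ^ 9 / 2 ^ (L + 1)) := by
        rw [pow_succ]; ring
      linarith
  have h2 : ∑ k ∈ Finset.range N, TB k ≤ ∑ k ∈ Finset.range (14 + N), TB k :=
    Finset.sum_le_sum_of_subset_of_nonneg (Finset.range_subset_range.2 (by omega))
      (fun _ _ _ => hnn _)
  have h3 : (0 : ℝ) ≤ 61250 / 10 ^ 9 / 2 ^ N := by positivity
  linarith [h N]

section GroupPart

variable {G : Type*} [Group G]

/-- homomorphisms `G → ℤ/p` as a subspace of functions -/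
def homSub (G : Type*) [Group G] (p : ℕ) : Submodule (ZMod p) (G → ZMod p) where
  carrier := {f | ∀ a b, f (a * b) = f a + f b}
  add_mem' := by
    intro f g hf hg a b
    simp only [Pi.add_apply, hf a b, hg a b]
    ring
  zero_mem' := by intro a b; simp
  smul_mem' := by
    intro c f hf a b
    simp only [Pi.smul_apply, hf a b, smul_add]

lemma homSub_vanish {p : ℕ} {f : G → ZMod p} (hf : f ∈ homSub G p) {S : Set G}
    (hS : closure S = ⊤) (h0 : ∀ s ∈ S, f s = 0) : f = 0 := by
  let φ : G →* Multiplicative (ZMod p) := MonoidHom.mk' (fun g => Multiplicative.ofAdd (f g))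
    (fun a b => by rw [hf a b]; rfl)
  have : S ⊆ φ.ker := fun s hs => by
    show φ s = 1
    show Multiplicative.ofAdd (f s) = 1
    rw [h0 s hs]; rfl
  have h2 := (closure_le _).2 this
  rw [hS] at h2
  funext g
  have h3 : φ g = 1 := h2 (mem_top g)
  exact Multiplicative.ofAdd.injective h3

lemma homSub_finrank_le [Finite G] {p : ℕ} [Fact p.Prime] (S : Finset G)
    (hS : closure (S : Set G) = ⊤) : Module.finrank (ZMod p) (homSub G p) ≤ S.card := by
  let L : (G → ZMod p) →ₗ[ZMod p] (S → ZMod p) := LinearMap.funLeft _ _ Subtype.val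
  have hinj : Function.Injective (L.comp (homSub G p).subtype) := by
    rw [← LinearMap.ker_eq_bot, LinearMap.ker_eq_bot']
    rintro ⟨f, hf⟩ h
    apply Subtype.ext
    refine homSub_vanish hf hS (fun s hs => ?_)
    exact congrFun h ⟨s, hs⟩
  have := LinearMap.finrank_le_finrank_of_injective hinj
  simpa using this

/-- The dimension of `Hom(G, ℤ/p)`. -/
noncomputable def dp (G : Type*) [Group G] (p : ℕ) : ℕ := Module.finrank (ZMod p) (homSub G p)

lemma exists_dMin [Finite G] : ∃ S : Finset G, S.card = dMin G ∧ closure (S : Set G) = ⊤ := by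
  have : {n : ℕ | ∃ S : Finset G, S.card = n ∧ Subgroup.closure (S : Set G) = ⊤}.Nonempty := by
    have := Fintype.ofFinite G
    exact ⟨_, Finset.univ, rfl, by simp⟩
  exact Nat.sInf_mem this

lemma dp_le [Finite G] (p : ℕ) [Fact p.Prime] : dp G p ≤ dMin G := by
  obtain ⟨S, h1, h2⟩ := exists_dMin (G := G)
  rw [← h1]; exact homSub_finrank_le S h2

/-- there is a surjection onto `(ℤ/p)^dp` through which every hom factors -/
lemma exists_fp [Finite G] (p : ℕ) [Fact p.Prime] :
    ∃ f : G → (Fin (dp G p) → ZMod p), (∀ a b, f (a * b) = f a + f b) ∧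
      Function.Surjective f ∧
      ∀ h ∈ homSub G p, ∃ c : Fin (dp G p) → ZMod p, ∀ g, h g = ∑ i, c i * f g i := by
  let b := Module.finBasis (ZMod p) (homSub G p)
  let f : G → (Fin (dp G p) → ZMod p) := fun g i => (b i : G → ZMod p) g
  have hf : ∀ a b, f (a * b) = f a + f b := by
    intro x y; funext i; exact (b i).2 x y
  refine ⟨f, hf, ?_, ?_⟩
  · let φ : Additive G →+ (Fin (dp G p) → ZMod p) := AddMonoidHom.mk' (fun g => f g.toMul)
      (fun a b => hf _ _)
    let R := AddSubgroup.toZModSubmodule p φ.range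
    have hR : R = ⊤ := by
      by_contra hne
      obtain ⟨ψ, hψ, hle⟩ := Submodule.exists_le_ker_of_lt_top R (lt_top_iff_ne_top.2 hne)
      apply hψ
      have key : ∑ i, ψ (Pi.single i 1) • b i = 0 := by
        apply Subtype.ext
        funext g
        have : ψ (f g) = 0 := hle (show f g ∈ R from ⟨Additive.ofMul g, rfl⟩)
        rw [LinearMap.pi_apply_eq_sum_univ ψ (f g)] at this
        simp only [Submodule.coe_sum, Submodule.coe_smul, Finset.sum_apply, Pi.smul_apply,
          smul_eq_mul, ZeroMemClass.coe_zero, Pi.zero_apply]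
        rw [← this]
        refine Finset.sum_congr rfl fun i _ => ?_
        rw [smul_eq_mul, mul_comm]
        congr 2
        ext j; simp [Pi.single_apply, eq_comm]
      have h0 := Fintype.linearIndependent_iff.1 b.linearIndependent _ key
      apply LinearMap.pi_ext'
      intro i
      apply LinearMap.ext_ring
      simpa using h0 i
    intro y
    have : y ∈ R := hR ▸ Submodule.mem_top
    obtain ⟨g, hg⟩ := this
    exact ⟨g.toMul, hg⟩
  · intro h hh
    refine ⟨fun i => b.repr ⟨h, hh⟩ i, fun g => ?_⟩
    have := congrArg (fun x : homSub G p => (x : G → ZMod p) g) (b.sum_repr ⟨h, hh⟩)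
    simp only [Submodule.coe_sum, Submodule.coe_smul, Finset.sum_apply, Pi.smul_apply,
          smul_eq_mul] at this
    exact this.symm

lemma exists_hom_of_ne_top [Finite G] [Group.IsNilpotent G] {H : Subgroup G} (hH : H ≠ ⊤) :
    ∃ p ∈ (Nat.card G).primeFactors, ∃ h ∈ homSub G p, h ≠ 0 ∧ ∀ g ∈ H, h g = 0 := by
  obtain ⟨M, hM, hHM⟩ := (eq_top_or_exists_le_coatom H).resolve_left hH
  have hn : M.Normal := Subgroup.NormalizerCondition.normal_of_coatom M
    Group.normalizerCondition_of_isNilpotent hM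
  have : Nontrivial (G ⧸ M) := QuotientGroup.nontrivial_iff.2 hM.1
  have hs : IsSimpleGroup (G ⧸ M) := ⟨fun N hN => by
    have hle : M ≤ N.comap (QuotientGroup.mk' M) := by
      intro x hx
      rw [mem_comap]
      rw [(QuotientGroup.eq_one_iff x : ((x : G ⧸ M) = 1) ↔ _).2 hx |> fun h => (show QuotientGroup.mk' M x = 1 from h)]
      exact one_mem _
    rcases hM.le_iff.1 hle with h | h
    · right
      rw [eq_top_iff]
      intro x _
      obtain ⟨y, rfl⟩ := QuotientGroup.mk'_surjective M x
      have : y ∈ N.comap (QuotientGroup.mk' M) := h ▸ mem_top y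
      exact this
    · left
      rw [eq_bot_iff]
      intro x hx
      obtain ⟨y, rfl⟩ := QuotientGroup.mk'_surjective M x
      have : y ∈ N.comap (QuotientGroup.mk' M) := hx
      rw [h] at this
      exact (QuotientGroup.eq_one_iff y).2 this⟩
  have hc : IsCyclic (G ⧸ M) := inferInstance
  have hp : (Nat.card (G ⧸ M)).Prime := by
    let _ : CommGroup (G ⧸ M) := IsCyclic.commGroup
    exact IsSimpleGroup.prime_card
  have e : ZMod (Nat.card (G ⧸ M)) ≃+ Additive (G ⧸ M) :=
    zmodAddCyclicAddEquiv (G := Additive (G ⧸ M)) inferInstance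
  refine ⟨Nat.card (G ⧸ M), ?_, fun g => e.symm (Additive.ofMul (QuotientGroup.mk' M g)), ?_, ?_, ?_⟩
  · rw [Nat.mem_primeFactors]
    exact ⟨hp, M.card_quotient_dvd_card, Nat.card_pos.ne'⟩
  · intro a b
    simp
  · intro h0
    obtain ⟨x, hx⟩ := exists_ne (1 : G ⧸ M)
    obtain ⟨y, rfl⟩ := QuotientGroup.mk'_surjective M x
    have := congrFun h0 y
    simp only [Pi.zero_apply, EmbeddingLike.map_eq_zero_iff] at this
    exact hx this
  · intro g hg
    have : QuotientGroup.mk' M g = 1 := (QuotientGroup.eq_one_iff g).2 (hHM hg)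
    simp only [this]
    simp

lemma card_preimage_hom {X Y : Type*} [Group X] [Group Y] [Finite X] [Finite Y] (f : X →* Y)
    (hf : Function.Surjective f) (S : Y → Prop) :
    Nat.card {x // S (f x)} * Nat.card Y = Nat.card X * Nat.card {y // S y} := by
  classical
  have hfib : ∀ y, Nat.card {x // f x = y} = Nat.card f.ker := by
    intro y
    obtain ⟨x0, rfl⟩ := hf y
    refine Nat.card_congr ⟨fun x => ⟨x0⁻¹ * x.1, ?_⟩, fun k => ⟨x0 * k.1, ?_⟩, ?_, ?_⟩
    · rw [MonoidHom.mem_ker, map_mul, map_inv, x.2, inv_mul_cancel]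
    · rw [map_mul, k.2, mul_one]
    · intro x; simp
    · intro x; simp
  have h1 : Nat.card {x // S (f x)} = Nat.card {y // S y} * Nat.card f.ker := by
    have e : {x // S (f x)} ≃ Σ y : {y // S y}, {x // f x = y.1} :=
      ⟨fun x => ⟨⟨f x.1, x.2⟩, ⟨x.1, rfl⟩⟩, fun z => ⟨z.2.1, by rw [z.2.2]; exact z.1.2⟩,
        fun x => rfl, by rintro ⟨⟨y, hy⟩, ⟨x, hx⟩⟩; dsimp only at hx; subst hx; rfl⟩
    have := Fintype.ofFinite {y // S y}
    rw [Nat.card_congr e, Nat.card_sigma]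
    simp [hfib]
  have h2 : Nat.card X = Nat.card Y * Nat.card f.ker := by
    have e : X ≃ Σ y : Y, {x // f x = y} := (Equiv.sigmaFiberEquiv f).symm
    have := Fintype.ofFinite Y
    conv_lhs => rw [Nat.card_congr e, Nat.card_sigma]
    simp [hfib]
  rw [h1, h2]; ring

lemma surj_of_coprime {ι : Type*} [Fintype ι] [Finite G] {A : ι → Type*} [∀ i, Group (A i)]
    [∀ i, Finite (A i)] (φ : ∀ i, G →* A i) (hφ : ∀ i, Function.Surjective (φ i))
    (hc : Pairwise (Function.onFun Nat.Coprime fun i => Nat.card (A i))) :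
    Function.Surjective (MonoidHom.pi φ : G →* ∀ i, A i) := by
  have hdvd : ∀ i, Nat.card (A i) ∣ Nat.card (MonoidHom.pi φ).range := by
    intro i
    refine Subgroup.card_dvd_of_surjective
      ((Pi.evalMonoidHom A i).comp (MonoidHom.pi φ).range.subtype) ?_
    intro a
    obtain ⟨g, hg⟩ := hφ i a
    exact ⟨⟨MonoidHom.pi φ g, ⟨g, rfl⟩⟩, hg⟩
  have h := Fintype.prod_dvd_of_coprime
    (fun i j hij => Nat.isCoprime_iff_coprime.2 (hc hij))
    (fun i => Int.natCast_dvd_natCast.2 (hdvd i))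
  rw [← Nat.cast_prod, Int.natCast_dvd_natCast, ← Nat.card_pi] at h
  rw [← MonoidHom.range_eq_top]
  exact Subgroup.eq_top_of_le_card _ (Nat.le_of_dvd Nat.card_pos h)

lemma genProb_ge [Finite G] [Group.IsNilpotent G] (n : ℕ) (hn : dMin G ≤ n) :
    ∏ p ∈ (Nat.card G).primeFactors, ∏ i ∈ Finset.range (dp G p), (1 - (p : ℝ) ^ i / (p : ℝ) ^ n)
      ≤ genProb G ∅ n := by
  classical
  have hP : ∀ p : (Nat.card G).primeFactors, Fact (p : ℕ).Prime :=
    fun p => ⟨Nat.prime_of_mem_primeFactors p.2⟩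
  choose f hf1 hf2 hf3 using fun p : (Nat.card G).primeFactors => exists_fp (G := G) (p : ℕ)
  let A : (Nat.card G).primeFactors → Type := fun p =>
    Multiplicative (Fin (dp G p) → ZMod (p : ℕ))
  have hfin : ∀ p, Finite (A p) := fun p =>
    inferInstanceAs (Finite (Fin (dp G p) → ZMod (p : ℕ)))
  let φ : ∀ p, G →* A p := fun p =>
    MonoidHom.mk' (fun g => Multiplicative.ofAdd (f p g)) (fun a b => by rw [hf1 p a b]; rfl)
  have hcard : ∀ p, Nat.card (A p) = (p : ℕ) ^ dp G p := by
    intro p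
    rw [show Nat.card (A p) = Nat.card (Fin (dp G p) → ZMod (p : ℕ)) from rfl]
    simp
  have hsurj : Function.Surjective (MonoidHom.pi φ : G →* ∀ p, A p) := by
    refine surj_of_coprime φ (fun p y => ?_) (fun p q hpq => ?_)
    · obtain ⟨g, hg⟩ := hf2 p y.toAdd
      exact ⟨g, congrArg Multiplicative.ofAdd hg⟩
    · simp only [Function.onFun, hcard]
      exact Nat.Coprime.pow _ _ ((Nat.coprime_primes (hP p).1 (hP q).1).2
        (fun h => hpq (Subtype.ext h)))
  let Φ : (Fin n → G) →* (Fin n → ∀ p, A p) := MonoidHom.mk' (fun v j => MonoidHom.pi φ (v j))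
    (fun a b => by funext j; exact map_mul _ _ _)
  have hΦ : Function.Surjective Φ := by
    intro y
    choose g hg using fun j => hsurj (y j)
    exact ⟨g, funext hg⟩
  let S : (Fin n → ∀ p, A p) → Prop := fun y => ∀ p : (Nat.card G).primeFactors,
    LinearIndependent (ZMod (p : ℕ)) (fun (i : Fin (dp G p)) (j : Fin n) => (y j p).toAdd i)
  have hmain := card_preimage_hom Φ hΦ S
  have hS : Nat.card {y // S y} = ∏ p : (Nat.card G).primeFactors,
      ∏ i : Fin (dp G p), ((p : ℕ) ^ n - (p : ℕ) ^ (i : ℕ)) := by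
    have e : {y // S y} ≃ ∀ p : (Nat.card G).primeFactors,
        {s : Fin (dp G p) → (Fin n → ZMod (p : ℕ)) // LinearIndependent (ZMod (p : ℕ)) s} :=
      ⟨fun y p => ⟨_, y.2 p⟩,
       fun s => ⟨fun j p => Multiplicative.ofAdd (fun i => (s p).1 i j), fun p => (s p).2⟩,
       fun y => rfl, fun s => rfl⟩
    rw [Nat.card_congr e, Nat.card_pi]
    refine Finset.prod_congr rfl fun p _ => ?_
    rw [card_linearIndependent]
    · simp
    · simpa using (dp_le (G := G) (p : ℕ)).trans hn
  have hgen : ∀ v : Fin n → G, S (Φ v) → closure (∅ ∪ Set.range v) = ⊤ := by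
    intro v hv
    by_contra hne
    obtain ⟨p, hp, h, hh, h0, hz⟩ := exists_hom_of_ne_top hne
    obtain ⟨c, hc⟩ := hf3 ⟨p, hp⟩ h hh
    have hli := Fintype.linearIndependent_iff.1 (hv ⟨p, hp⟩) c (by
      funext j
      have := hz (v j) (subset_closure (Or.inr ⟨j, rfl⟩))
      rw [hc] at this
      simp only [Finset.sum_apply, Pi.smul_apply, smul_eq_mul, Pi.zero_apply]
      exact this)
    apply h0
    funext g
    rw [hc]
    simp [hli]
  have hle : Nat.card {v // S (Φ v)} ≤
      Nat.card {v : Fin n → G // closure (∅ ∪ Set.range v) = ⊤} :=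
    Nat.card_le_card_of_injective (fun v => ⟨v.1, hgen v.1 v.2⟩)
      (fun a b h => by simpa [Subtype.ext_iff] using h)
  have hY : Nat.card (Fin n → ∀ p, A p) = ∏ p : (Nat.card G).primeFactors,
      ((p : ℕ) ^ dp G p) ^ n := by
    rw [Nat.card_fun, Nat.card_pi]
    simp only [hcard, Nat.card_eq_fintype_card, Fintype.card_fin, Finset.prod_pow]
  have hX : Nat.card (Fin n → G) = Nat.card G ^ n := by
    rw [Nat.card_fun]; simp
  have hG0 : (0 : ℝ) < Nat.card G := by exact_mod_cast Nat.card_pos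
  have hprod : ∏ p ∈ (Nat.card G).primeFactors, ∏ i ∈ Finset.range (dp G p),
      (1 - (p : ℝ) ^ i / (p : ℝ) ^ n) =
      (Nat.card {y // S y} : ℝ) / Nat.card (Fin n → ∀ p, A p) := by
    rw [hS, hY, ← Finset.prod_coe_sort]
    push_cast
    rw [← Finset.prod_div_distrib]
    refine Finset.prod_congr rfl fun p _ => ?_
    have hp0 : (0 : ℝ) < (p : ℕ) := by exact_mod_cast (hP p).1.pos
    rw [← pow_mul, mul_comm, pow_mul, Finset.prod_range]
    rw [show (((p : ℕ) : ℝ) ^ n) ^ dp G p = ∏ i : Fin (dp G p), ((p : ℕ) : ℝ) ^ n by simp,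
      ← Finset.prod_div_distrib]
    refine Finset.prod_congr rfl fun i _ => ?_
    have hi : (i : ℕ) ≤ n := (i.2.le.trans (dp_le (G := G) (p : ℕ))).trans hn
    rw [Nat.cast_sub (Nat.pow_le_pow_right (hP p).1.pos hi)]
    push_cast
    field_simp
  rw [hprod, genProb]
  have hY0 : (0 : ℝ) < Nat.card (Fin n → ∀ p, A p) := by exact_mod_cast Nat.card_pos
  rw [div_le_div_iff₀ hY0 (by positivity)]
  rw [hX] at hmain
  calc (Nat.card {y // S y} : ℝ) * (Nat.card G : ℝ) ^ n
      = Nat.card {v // S (Φ v)} * Nat.card (Fin n → ∀ p, A p) := by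
        exact_mod_cast (by rw [hmain, mul_comm])
    _ ≤ _ := by gcongr

lemma genProb_le_one [Finite G] (Y : Set G) (n : ℕ) : genProb G Y n ≤ 1 := by
  have hG0 : (0 : ℝ) < Nat.card G := by exact_mod_cast Nat.card_pos
  rw [genProb, div_le_one (by positivity)]
  have : Nat.card {v : Fin n → G // closure (Y ∪ Set.range v) = ⊤} ≤ Nat.card (Fin n → G) :=
    Nat.card_le_card_of_injective _ Subtype.val_injective
  rw [Nat.card_fun, Nat.card_eq_fintype_card (α := Fin n), Fintype.card_fin] at this
  exact_mod_cast this

lemma genProb_nonneg (Y : Set G) (n : ℕ) : 0 ≤ genProb G Y n := by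
  unfold genProb; positivity

lemma genProb_mono [Finite G] (Y : Set G) (n : ℕ) : genProb G ∅ n ≤ genProb G Y n := by
  unfold genProb
  gcongr
  refine Nat.card_le_card_of_injective (fun v => ⟨v.1, ?_⟩)
      (fun a b h => by simpa [Subtype.ext_iff] using h)
  have := v.2
  rw [eq_top_iff]
  refine this.symm.le.trans (closure_mono ?_)
  simp

lemma genProb_eq_zero [Finite G] (g : G) (n : ℕ) (h : n + 1 < dMin G) : genProb G {g} n = 0 := by
  classical
  have : IsEmpty {v : Fin n → G // closure ({g} ∪ Set.range v) = ⊤} := by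
    constructor
    rintro ⟨v, hv⟩
    have h1 : dMin G ≤ (insert g (Finset.univ.image v)).card := by
      apply Nat.sInf_le
      refine ⟨_, rfl, ?_⟩
      rw [← hv]
      congr 1
      ext x; simp [eq_comm]
    have h2 := Finset.card_insert_le g (Finset.univ.image v)
    have h3 := Finset.card_image_le (s := Finset.univ) (f := v)
    simp at h3
    omega
  rw [genProb, Nat.card_of_isEmpty, Nat.cast_zero, zero_div]

end GroupPart

lemma euler_bound (s : Finset ℕ) (hs : ∀ p ∈ s, p.Prime) {j : ℕ} (hj : 2 ≤ j) :
    1 / (1 + zu j) ≤ ∏ p ∈ s, (1 - 1 / (p : ℝ) ^ j) := by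
  let f : ℕ →* ℝ := ⟨⟨fun n => 1 / (n : ℝ) ^ j, by simp⟩, fun a b => by
    simp only [Nat.cast_mul, mul_pow]; ring⟩
  have hsum : Summable f := (Real.summable_one_div_nat_pow (p := j)).2 (by omega)
  have h := EulerProduct.prod_filter_prime_geometric_eq_tsum_factoredNumbers hsum s
  rw [Finset.filter_true_of_mem hs] at h
  have h2 : ∑' m : Nat.factoredNumbers s, f m ≤ 1 + zu j := by
    rw [← zt_eq hj]
    refine Summable.tsum_subtype_le f _ (fun n => ?_) hsum
    show 0 ≤ 1 / (n : ℝ) ^ j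
    positivity
  rw [← h, Finset.prod_inv_distrib] at h2
  have hpos : 0 < ∏ p ∈ s, (1 - f p) := by
    refine Finset.prod_pos fun p hp => ?_
    show 0 < 1 - 1 / (p : ℝ) ^ j
    have h2 : (1 : ℝ) < p := by exact_mod_cast (hs p hp).one_lt
    have : 1 / (p : ℝ) ^ j < 1 := by
      rw [div_lt_one (by positivity)]
      exact one_lt_pow₀ h2 (by omega)
    linarith
  rw [one_div]
  exact inv_le_of_inv_le₀ hpos h2

lemma prob_bound (G : Type*) [Group G] [Finite G] [Group.IsNilpotent G] (k : ℕ) :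
    1 - genProb G ∅ (dMin G + k) ≤ TB k := by
  rcases Nat.eq_zero_or_pos k with rfl | hk
  · have := genProb_nonneg (G := G) ∅ (dMin G + 0)
    simp only [TB]; linarith
  have h1 := genProb_ge (G := G) (dMin G + k) (by omega)
  have h2 := PB_TB k hk (k + 1 + dMin G)
  have h3 : ∏ j ∈ Finset.Ico (k + 1) (k + 1 + dMin G), 1 / (1 + zu j) ≤
      ∏ j ∈ Finset.Ico (k + 1) (k + 1 + dMin G),
        ∏ p ∈ (Nat.card G).primeFactors, (1 - 1 / (p : ℝ) ^ j) := by
    refine Finset.prod_le_prod (fun j _ => ?_) (fun j hj => ?_)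
    · have := zu_nonneg j; positivity
    · rw [Finset.mem_Ico] at hj
      exact euler_bound _ (fun p hp => Nat.prime_of_mem_primeFactors hp) (by omega)
  rw [Finset.prod_comm] at h3
  have h4 : ∏ p ∈ (Nat.card G).primeFactors, ∏ j ∈ Finset.Ico (k + 1) (k + 1 + dMin G),
      (1 - 1 / (p : ℝ) ^ j) ≤ ∏ p ∈ (Nat.card G).primeFactors,
        ∏ i ∈ Finset.range (dp G p), (1 - (p : ℝ) ^ i / (p : ℝ) ^ (dMin G + k)) := by
    have hb : ∀ p ∈ (Nat.card G).primeFactors, ∀ j : ℕ,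
        0 ≤ 1 - 1 / (p : ℝ) ^ j ∧ 1 - 1 / (p : ℝ) ^ j ≤ 1 := by
      intro p hp j
      have h2 : (1 : ℝ) ≤ p := by exact_mod_cast (Nat.prime_of_mem_primeFactors hp).one_le
      have h3 : 1 / (p : ℝ) ^ j ≤ 1 := by
        rw [div_le_one (by positivity)]
        exact one_le_pow₀ h2
      have h4 : 0 ≤ 1 / (p : ℝ) ^ j := by positivity
      constructor <;> linarith
    refine Finset.prod_le_prod (fun p hp => Finset.prod_nonneg fun j _ => (hb p hp j).1)
      (fun p hp => ?_)
    have : Fact p.Prime := ⟨Nat.prime_of_mem_primeFactors hp⟩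
    have hd := dp_le (G := G) p
    have hp0 : (0 : ℝ) < p := by exact_mod_cast (Nat.prime_of_mem_primeFactors hp).pos
    have e : ∏ j ∈ Finset.Ico (k + 1) (k + 1 + dMin G), (1 - 1 / (p : ℝ) ^ j) =
        ∏ i ∈ Finset.range (dMin G), (1 - (p : ℝ) ^ i / (p : ℝ) ^ (dMin G + k)) := by
      rw [Finset.prod_Ico_eq_prod_range, Nat.add_sub_cancel_left, ← Finset.prod_range_reflect]
      refine Finset.prod_congr rfl fun i hi => ?_
      rw [Finset.mem_range] at hi
      congr 1
      rw [div_eq_div_iff (by positivity) (by positivity), one_mul, ← pow_add]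
      congr 1
      omega
    rw [e]
    have hp1 : (1 : ℝ) ≤ p := by exact_mod_cast (Nat.prime_of_mem_primeFactors hp).one_le
    refine Finset.prod_le_prod_of_subset_of_le_one (Finset.range_subset_range.2 hd)
      (fun i hi => ?_) (fun i _ _ => ?_)
    · rw [Finset.mem_range] at hi
      rw [sub_nonneg, div_le_one (by positivity)]
      exact pow_le_pow_right₀ hp1 (by omega)
    · have : 0 ≤ (p : ℝ) ^ i / (p : ℝ) ^ (dMin G + k) := by positivity
      linarith
  linarith

/-- For a finite nilpotent group `G`, `e(G) ≤ d(G) + 2.1185`; consequently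
`e(G) - e(G,g) ≤ 3.1185` for every `g ∈ G`. -/
theorem stmt13 (G : Type*) [Group G] [Finite G] [Group.IsNilpotent G] :
    eTime G ∅ ≤ (dMin G : ℝ) + 2.1185 ∧
      ∀ g : G, eTime G ∅ - eTime G {g} ≤ 3.1185 := by
  have hnn : ∀ Y n, 0 ≤ 1 - genProb G Y n := fun Y n => by linarith [genProb_le_one Y n]
  have hsum : ∀ N, ∑ n ∈ Finset.range N, (1 - genProb G ∅ n) ≤ (dMin G : ℝ) + 2.1185 := by
    intro N
    calc ∑ n ∈ Finset.range N, (1 - genProb G ∅ n)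
        ≤ ∑ n ∈ Finset.range (dMin G + N), (1 - genProb G ∅ n) :=
          Finset.sum_le_sum_of_subset_of_nonneg (Finset.range_subset_range.2 (by omega))
            (fun _ _ _ => hnn _ _)
      _ = ∑ n ∈ Finset.range (dMin G), (1 - genProb G ∅ n) +
          ∑ k ∈ Finset.range N, (1 - genProb G ∅ (dMin G + k)) := Finset.sum_range_add _ _ _
      _ ≤ ∑ n ∈ Finset.range (dMin G), (1 : ℝ) + ∑ k ∈ Finset.range N, TB k := by
          gcongr with n _ k _
          · linarith [genProb_nonneg (G := G) ∅ n]
          · exact prob_bound G k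
      _ ≤ _ := by
          have := TB_sum N
          simp only [Finset.sum_const, Finset.card_range, nsmul_eq_mul, mul_one]
          linarith
  have hS := summable_of_sum_range_le (hnn ∅) hsum
  have h1 : eTime G ∅ ≤ (dMin G : ℝ) + 2.1185 := Real.tsum_le_of_sum_range_le (hnn ∅) hsum
  refine ⟨h1, fun g => ?_⟩
  have hSg : Summable (fun n => 1 - genProb G {g} n) :=
    Summable.of_nonneg_of_le (hnn {g}) (fun n => by linarith [genProb_mono {g} n]) hS
  have h2 : (dMin G : ℝ) - 1 ≤ eTime G {g} := by
    have h3 := hSg.sum_le_tsum (Finset.range (dMin G - 1)) (fun n _ => hnn {g} n)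
    have h4 : ∑ n ∈ Finset.range (dMin G - 1), (1 - genProb G {g} n) = ((dMin G - 1 : ℕ) : ℝ) := by
      rw [Finset.sum_congr rfl (g := fun _ => (1 : ℝ))]
      · simp
      · intro n hn
        rw [Finset.mem_range] at hn
        rw [genProb_eq_zero g n (by omega), sub_zero]
    rw [h4] at h3
    have h5 : dMin G ≤ (dMin G - 1) + 1 := by omega
    have h6 : (dMin G : ℝ) ≤ ((dMin G - 1 : ℕ) : ℝ) + 1 := by exact_mod_cast h5
    unfold eTime
    linarith
  linarith
end
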